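/- Let T ∈ SVRPP^n(λ/μ) and i ∈ {1,...,n−1}. Then E_i(read(T)) = read(e_i(T)), with the convention that both sides are 0 simultaneously; in particular e_i(T) = 0 if and only if E_i(read(T)) = 0. -/

import Mathlib

open scoped Classical

/-- A partition, given as its weakly decreasing sequence of parts (0-indexed),
with finitely many nonzero parts. -/
def IsPartitionFun (f : ℕ → ℕ) : Prop :=
  (∀ i, f (i + 1) ≤ f i) ∧ ∃ N, ∀ i, N ≤ i → f i = 0

/-- Box `(i, j)` (row `i`, column `j`, both 0-indexed) lies in the skew shape `lam/mu`. -/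
def InShape (lam mu : ℕ → ℕ) (i j : ℕ) : Prop :=
  mu i ≤ j ∧ j < lam i

/-- `A ≤ B` for finite sets of naturals: every element of `A` is at most every
element of `B` (for nonempty sets this says `max A ≤ min B`). -/
def FinsetLE (A B : Finset ℕ) : Prop :=
  ∀ a ∈ A, ∀ b ∈ B, a ≤ b

/-- A set-valued reverse plane partition of skew shape `lam/mu`: every box of the
shape is filled with a nonempty finite set of positive integers, the sets weakly
increase along rows and down columns, and boxes outside the shape are empty. -/
def IsSVRPP (lam mu : ℕ → ℕ) (T : ℕ → ℕ → Finset ℕ) : Prop :=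
  (∀ i j, ¬ InShape lam mu i j → T i j = ∅) ∧
  (∀ i j, InShape lam mu i j → (T i j).Nonempty) ∧
  (∀ i j x, x ∈ T i j → 1 ≤ x) ∧
  (∀ i j, InShape lam mu i j → InShape lam mu i (j + 1) → FinsetLE (T i j) (T i (j + 1))) ∧
  (∀ i j, InShape lam mu i j → InShape lam mu (i + 1) j → FinsetLE (T i j) (T (i + 1) j))

/-- An SVRPP all of whose entries are subsets of `{1, …, n}`. -/
def IsSVRPPn (lam mu : ℕ → ℕ) (n : ℕ) (T : ℕ → ℕ → Finset ℕ) : Prop :=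
  IsSVRPP lam mu T ∧ ∀ i j, T i j ⊆ Finset.Icc 1 n

/-- `ircont T v` = number of columns of `T` containing a set that contains `v`. -/
noncomputable def ircont (T : ℕ → ℕ → Finset ℕ) (v : ℕ) : ℕ :=
  Set.ncard {j : ℕ | ∃ i, v ∈ T i j}

/-- `ceq lam mu T i` = number of boxes `(i,j)` of the shape with `(i+1,j)` also in the
shape and `max T(i,j) = min T(i+1,j)`. -/
noncomputable def ceq (lam mu : ℕ → ℕ) (T : ℕ → ℕ → Finset ℕ) (i : ℕ) : ℕ :=
  Set.ncard {j : ℕ | InShape lam mu i j ∧ InShape lam mu (i + 1) j ∧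
    ∃ m, m ∈ T i j ∧ (∀ x ∈ T i j, x ≤ m) ∧ m ∈ T (i + 1) j ∧ ∀ x ∈ T (i + 1) j, m ≤ x}

/-- `exv lam mu T i` = excess of row `i`: the sum over the boxes of row `i` of
(cardinality of the filling minus one). -/
def exv (lam mu : ℕ → ℕ) (T : ℕ → ℕ → Finset ℕ) (i : ℕ) : ℕ :=
  ∑ j ∈ Finset.Ico (mu i) (lam i), ((T i j).card - 1)

/-! ### Two-letter fillings (letters `a` and `a+1`) and descent resolution -/

/-- Column `j` of the filling `S` contains the letter `x` somewhere. -/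
def ColHas (S : ℕ → ℕ → Finset ℕ) (j x : ℕ) : Prop := ∃ r, x ∈ S r j

/-- Column `j` is `a`-pure: it contains the letter `a` but not the letter `a+1`. -/
def ColPureA (a : ℕ) (S : ℕ → ℕ → Finset ℕ) (j : ℕ) : Prop :=
  ColHas S j a ∧ ¬ ColHas S j (a + 1)

/-- Column `j` is `(a+1)`-pure: it contains the letter `a+1` but not the letter `a`. -/
def ColPureB (a : ℕ) (S : ℕ → ℕ → Finset ℕ) (j : ℕ) : Prop :=
  ColHas S j (a + 1) ∧ ¬ ColHas S j a

/-- Column `j` is mixed: it contains both letters `a` and `a+1`. -/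
def ColMixed (a : ℕ) (S : ℕ → ℕ → Finset ℕ) (j : ℕ) : Prop :=
  ColHas S j a ∧ ColHas S j (a + 1)

/-- `sep a S j`: the smallest row index `r` with `a+1 ∈ S r j` (the transition row of a
mixed column). -/
noncomputable def sep (a : ℕ) (S : ℕ → ℕ → Finset ℕ) (j : ℕ) : ℕ :=
  sInf {r : ℕ | a + 1 ∈ S r j}

/-- `botA a S j`: the largest row index `r` with `a ∈ S r j` (the bottom-most box of
column `j` containing the letter `a`). -/
noncomputable def botA (a : ℕ) (S : ℕ → ℕ → Finset ℕ) (j : ℕ) : ℕ :=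
  sSup {r : ℕ | a ∈ S r j}

/-- `k` is a descent of `S`: in some row, a box whose maximum is `a+1` lies immediately
to the left of a box whose minimum is `a`. -/
def Descent (a : ℕ) (S : ℕ → ℕ → Finset ℕ) (k : ℕ) : Prop :=
  ∃ r, a + 1 ∈ S r k ∧ a ∈ S r (k + 1)

/-- The flip map: each entry of every `a`-pure column is replaced by `{a+1}`, each entry
of every `(a+1)`-pure column is replaced by `{a}`, and mixed columns stay unchanged. -/
noncomputable def flipT (a : ℕ) (S : ℕ → ℕ → Finset ℕ) : ℕ → ℕ → Finset ℕ :=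
  fun r j =>
    if ColPureA a S j then (S r j).image (fun _ => a + 1)
    else if ColPureB a S j then (S r j).image (fun _ => a)
    else S r j

/-- The descent-resolution operation `res_k` at columns `k, k+1`, implementing the
(M1), (2M) and (21) moves (with `a, a+1` playing the roles of `1, 2`). -/
noncomputable def resFun (a : ℕ) (S : ℕ → ℕ → Finset ℕ) (k : ℕ) : ℕ → ℕ → Finset ℕ :=
  fun r j =>
    if ColMixed a S k ∧ ColPureA a S (k + 1) then
      -- (M1): the transition row is `sep a S k`, the transition entry is `S (sep a S k) k`.
      (if j = k then (S r j).image (fun _ => a)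
       else if j = k + 1 then
         (if (S r j).Nonempty then
            (if r < sep a S k then {a}
             else if r = sep a S k then S r k
             else {a + 1})
          else ∅)
       else S r j)
    else if ColPureB a S k ∧ ColMixed a S (k + 1) then
      -- (2M): the transition row is `botA a S (k+1)`, the transition entry is
      -- `S (botA a S (k+1)) (k+1)`.
      (if j = k then
         (if (S r j).Nonempty then
            (if r < botA a S (k + 1) then {a}
             else if r = botA a S (k + 1) then S r (k + 1)
             else {a + 1})
          else ∅)
       else if j = k + 1 then (S r j).image (fun _ => a + 1)
       else S r j)
    else if ColPureB a S k ∧ ColPureA a S (k + 1) then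
      -- (21): the two columns swap purities.
      (if j = k then (S r j).image (fun _ => a)
       else if j = k + 1 then (S r j).image (fun _ => a + 1)
       else S r j)
    else S r j

/-- One descent-resolution step: `ResStep a S S'` holds when `S' = res_k S` for some
descent `k` of `S`. -/
def ResStep (a : ℕ) (S S' : ℕ → ℕ → Finset ℕ) : Prop :=
  ∃ k, Descent a S k ∧ S' = resFun a S k

/-! ### Crystal operators on set-valued reverse plane partitions -/

/-- The restriction `T^{(i)}` of a filling to the letters `i` and `i+1`: each box keeps
its intersection with `{i, i+1}`. -/
def restrictTwo (i : ℕ) (T : ℕ → ℕ → Finset ℕ) : ℕ → ℕ → Finset ℕ :=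
  fun r j => (T r j).filter (fun x => x = i ∨ x = i + 1)

/-- The complement of `T^{(i)}` inside `T`: each box keeps its letters other than
`i` and `i+1`. -/
def eraseTwo (i : ℕ) (T : ℕ → ℕ → Finset ℕ) : ℕ → ℕ → Finset ℕ :=
  fun r j => (T r j).filter (fun x => ¬ (x = i ∨ x = i + 1))

/-- Recombine a filling `T` with a new `{i, i+1}`-part `S`. -/
def mergeTwo (i : ℕ) (T S : ℕ → ℕ → Finset ℕ) : ℕ → ℕ → Finset ℕ :=
  fun r j => eraseTwo i T r j ∪ S r j

/-- In column `A`, replace every letter `i+1` by `i`. -/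
def raiseCol (i A : ℕ) (S : ℕ → ℕ → Finset ℕ) : ℕ → ℕ → Finset ℕ :=
  fun r j => if j = A then (S r j).image (fun x => if x = i + 1 then i else x) else S r j

/-- In column `A`, replace every letter `i` by `i+1`. -/
def lowerCol (i A : ℕ) (S : ℕ → ℕ → Finset ℕ) : ℕ → ℕ → Finset ℕ :=
  fun r j => if j = A then (S r j).image (fun x => if x = i then i + 1 else x) else S r j

/-- Suffix statistic of the `i`-signature: the number of `(i+1)`-pure columns `≥ p` minus
the number of `i`-pure columns `≥ p` (of `T^{(i)}`). -/
noncomputable def fsuffix (i : ℕ) (T : ℕ → ℕ → Finset ℕ) (p : ℕ) : ℤ :=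
  (Set.ncard {j : ℕ | p ≤ j ∧ ColPureB i (restrictTwo i T) j} : ℤ) -
  (Set.ncard {j : ℕ | p ≤ j ∧ ColPureA i (restrictTwo i T) j} : ℤ)

/-- Prefix statistic of the `i`-signature: the number of `i`-pure columns `≤ p` minus the
number of `(i+1)`-pure columns `≤ p` (of `T^{(i)}`). -/
noncomputable def gprefix (i : ℕ) (T : ℕ → ℕ → Finset ℕ) (p : ℕ) : ℤ :=
  (Set.ncard {j : ℕ | j ≤ p ∧ ColPureA i (restrictTwo i T) j} : ℤ) -
  (Set.ncard {j : ℕ | j ≤ p ∧ ColPureB i (restrictTwo i T) j} : ℤ)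

/-- Column `A` carries the leftmost uncancelled `−` of the reduced `i`-signature of `T`:
it is `(i+1)`-pure and is the largest maximizer of the suffix statistic. -/
def LeftmostUnpairedMinus (i : ℕ) (T : ℕ → ℕ → Finset ℕ) (A : ℕ) : Prop :=
  ColPureB i (restrictTwo i T) A ∧
  (∀ p, fsuffix i T p ≤ fsuffix i T A) ∧
  (∀ p, A < p → fsuffix i T p < fsuffix i T A)

/-- Column `A` carries the rightmost uncancelled `+` of the reduced `i`-signature of `T`:
it is `i`-pure and is the smallest maximizer of the prefix statistic. -/
def RightmostUnpairedPlus (i : ℕ) (T : ℕ → ℕ → Finset ℕ) (A : ℕ) : Prop :=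
  ColPureA i (restrictTwo i T) A ∧
  (∀ p, gprefix i T p ≤ gprefix i T A) ∧
  (∀ p, p < A → gprefix i T p < gprefix i T A)

/-- `ERel i T T'` : `T'` is obtained from `T` by the raising operator `e_i`: change all
`(i+1)`'s to `i`'s in the column of the leftmost uncancelled `−`, run the
descent-resolution algorithm on the `{i, i+1}`-part until no descent remains, and merge
the result back into `T`. -/
def ERel (i : ℕ) (T T' : ℕ → ℕ → Finset ℕ) : Prop :=
  ∃ A S', LeftmostUnpairedMinus i T A ∧
    Relation.ReflTransGen (ResStep i) (raiseCol i A (restrictTwo i T)) S' ∧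
    (∀ k, ¬ Descent i S' k) ∧
    T' = mergeTwo i T S'

/-- `FRel i T T'` : `T'` is obtained from `T` by the lowering operator `f_i`. -/
def FRel (i : ℕ) (T T' : ℕ → ℕ → Finset ℕ) : Prop :=
  ∃ A S', RightmostUnpairedPlus i T A ∧
    Relation.ReflTransGen (ResStep i) (lowerCol i A (restrictTwo i T)) S' ∧
    (∀ k, ¬ Descent i S' k) ∧
    T' = mergeTwo i T S'

/-- The raising crystal operator `e_i` (with value `none` playing the role of `0`). -/
noncomputable def eOp (i : ℕ) (T : ℕ → ℕ → Finset ℕ) : Option (ℕ → ℕ → Finset ℕ) :=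
  if h : ∃ T', ERel i T T' then some h.choose else none

/-- The lowering crystal operator `f_i` (with value `none` playing the role of `0`). -/
noncomputable def fOp (i : ℕ) (T : ℕ → ℕ → Finset ℕ) : Option (ℕ → ℕ → Finset ℕ) :=
  if h : ∃ T', FRel i T T' then some h.choose else none

/-! ### Reading words -/

/-- The contribution of row `r` to the reading word of `T` (columns bounded by `C`; empty
boxes are skipped). First the non-pivot entries are read from right to left, within each
box from largest to smallest; then the pivots (minima of boxes) are read from left to
right, omitting every pivot equal to the maximum entry of the (nonempty) box directly
above it. -/
noncomputable def rowRead (C : ℕ) (T : ℕ → ℕ → Finset ℕ) (r : ℕ) : List ℕ :=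
  (((List.range C).reverse).flatMap
      (fun j => ((T r j).sort (· ≤ ·)).tail.reverse)) ++
  ((List.range C).filterMap
      (fun j =>
        if h : (T r j).Nonempty then
          (if r ≠ 0 ∧ (T r j).min' h ∈ T (r - 1) j ∧
              (∀ x ∈ T (r - 1) j, x ≤ (T r j).min' h)
           then none else some ((T r j).min' h))
        else none))

/-- The reading word of `T`: rows are read from bottom (row `R - 1`) to top (row `0`). -/
noncomputable def readWord (R C : ℕ) (T : ℕ → ℕ → Finset ℕ) : List ℕ :=
  ((List.range R).reverse).flatMap (fun r => rowRead C T r)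

/-- The height vector of `T`: the sequence of (0-indexed) row indices of the letters of
the reading word. -/
noncomputable def heightWord (R C : ℕ) (T : ℕ → ℕ → Finset ℕ) : List ℕ :=
  ((List.range R).reverse).flatMap (fun r => (rowRead C T r).map (fun _ => r))

/-- A word is a reverse lattice (Yamanouchi) word if every suffix contains at least as
many `a`'s as `b`'s whenever `a < b` (for positive letters). -/
def IsReverseLatticeWord (w : List ℕ) : Prop :=
  ∀ k a b, 1 ≤ a → a < b → (w.drop k).count b ≤ (w.drop k).count a

/-! ### The crystal raising operator on words -/

/-- Suffix statistic for the bracketing rule on a word: the number of letters `i+1` minus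
the number of letters `i` in the suffix starting at position `p`. -/
def wordF (i : ℕ) (w : List ℕ) (p : ℕ) : ℤ :=
  ((w.drop p).count (i + 1) : ℤ) - ((w.drop p).count i : ℤ)

/-- The raising operator `E_i` on words: if after the bracketing rule some `−` (letter
`i+1`) remains uncancelled, the one corresponding to the leftmost uncancelled `−`
(located at the largest maximizer `p` of the suffix statistic) is changed into an `i`;
otherwise the result is `0` (i.e. `none`). -/
noncomputable def EWord (i : ℕ) (w : List ℕ) : Option (List ℕ) :=
  if h : ∃ p, (∀ q, wordF i w q ≤ wordF i w p) ∧
      (∀ q, p < q → wordF i w q < wordF i w p) ∧ 1 ≤ wordF i w p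
  then some (w.set h.choose i) else none


/-! ### Proof -/

structure Nice (R C : ℕ) (T : ℕ → ℕ → Finset ℕ) : Prop where
  mono : ∀ {r r' j j' x y : ℕ}, r ≤ r' → j ≤ j' → (r < r' ∨ j < j') →
    x ∈ T r j → y ∈ T r' j' → x ≤ y
  mid : ∀ {r r' j j' x y : ℕ} (r1 j1 : ℕ), r ≤ r1 → r1 ≤ r' → j ≤ j1 → j1 ≤ j' →
    (r < r' ∨ j < j') → x ∈ T r j → y ∈ T r' j' → ∃ z ∈ T r1 j1, x ≤ z ∧ z ≤ y
  bd : ∀ {r j x : ℕ}, x ∈ T r j → r < R ∧ j < C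

theorem part_anti {f : ℕ → ℕ} (hf : IsPartitionFun f) {r r' : ℕ} (h : r ≤ r') : f r' ≤ f r :=
  antitone_nat_of_succ_le hf.1 h

theorem svrpp_nice {lam mu : ℕ → ℕ} (hlam : IsPartitionFun lam) (hmu : IsPartitionFun mu)
    {R C : ℕ} (hR : ∀ r, R ≤ r → lam r = 0) (hC : ∀ r, lam r ≤ C)
    {T : ℕ → ℕ → Finset ℕ} (hT : IsSVRPP lam mu T) : Nice R C T := by
  obtain ⟨h0, h1, h2, h3, h4⟩ := hT
  have hin : ∀ {r j x}, x ∈ T r j → InShape lam mu r j := by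
    intro r j x hx
    by_contra hc
    rw [h0 r j hc] at hx
    simp at hx
  have fill : ∀ {r r' j j' x y : ℕ} (r1 j1 : ℕ), r ≤ r1 → r1 ≤ r' → j ≤ j1 → j1 ≤ j' →
      x ∈ T r j → y ∈ T r' j' → (T r1 j1).Nonempty := by
    intro r r' j j' x y r1 j1 a b c d hx hy
    apply h1
    have e1 := hin hx
    have e2 := hin hy
    have := part_anti hmu a
    have := part_anti hlam b
    unfold InShape at *
    omega
  have row : ∀ d r j x y, x ∈ T r j → y ∈ T r (j + d + 1) → x ≤ y := by
    intro d
    induction d with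
    | zero => intro r j x y hx hy; exact h3 r j (hin hx) (hin hy) x hx y hy
    | succ d ih =>
      intro r j x y hx hy
      obtain ⟨z, hz⟩ := fill r (j + d + 1) le_rfl le_rfl (by omega) (by omega) hx hy
      exact (ih r j x z hx hz).trans (h3 r (j + d + 1) (hin hz) (hin hy) z hz y hy)
  have col : ∀ d r j x y, x ∈ T r j → y ∈ T (r + d + 1) j → x ≤ y := by
    intro d
    induction d with
    | zero => intro r j x y hx hy; exact h4 r j (hin hx) (hin hy) x hx y hy
    | succ d ih =>
      intro r j x y hx hy
      obtain ⟨z, hz⟩ := fill (r + d + 1) j (by omega) (by omega) le_rfl le_rfl hx hy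
      exact (ih r j x z hx hz).trans (h4 (r + d + 1) j (hin hz) (hin hy) z hz y hy)
  have mono : ∀ {r r' j j' x y : ℕ}, r ≤ r' → j ≤ j' → (r < r' ∨ j < j') →
      x ∈ T r j → y ∈ T r' j' → x ≤ y := by
    intro r r' j j' x y hr hj hne hx hy
    rcases Nat.lt_or_ge r r' with hr' | hr'
    · obtain ⟨d, rfl⟩ := Nat.exists_eq_add_of_lt hr'
      rcases Nat.lt_or_ge j j' with hj' | hj'
      · obtain ⟨d', rfl⟩ := Nat.exists_eq_add_of_lt hj'
        obtain ⟨z, hz⟩ := fill r (j + d' + 1) le_rfl (by omega) (by omega) le_rfl hx hy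
        exact (row d' r j x z hx hz).trans (col d r _ z y hz hy)
      · obtain rfl : j = j' := by omega
        exact col d r j x y hx hy
    · obtain rfl : r = r' := by omega
      obtain ⟨d, rfl⟩ := Nat.exists_eq_add_of_lt (show j < j' by omega)
      exact row d r j x y hx hy
  refine ⟨mono, ?_, ?_⟩
  · intro r r' j j' x y r1 j1 a b c d hne hx hy
    by_cases e1 : r = r1 ∧ j = j1
    · obtain ⟨rfl, rfl⟩ := e1
      exact ⟨x, hx, le_rfl, mono b d hne hx hy⟩
    by_cases e2 : r1 = r' ∧ j1 = j'
    · obtain ⟨rfl, rfl⟩ := e2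
      exact ⟨y, hy, mono a c hne hx hy, le_rfl⟩
    obtain ⟨z, hz⟩ := fill r1 j1 a b c d hx hy
    exact ⟨z, hz, mono a c (by omega) hx hz, mono b d (by omega) hz hy⟩
  · intro r j x hx
    have := hin hx
    unfold InShape at this
    have h5 := hC r
    refine ⟨?_, by omega⟩
    by_contra hc
    have := hR r (by omega)
    omega

def TopE (T : ℕ → ℕ → Finset ℕ) (x r j : ℕ) : Prop :=
  x ∈ T r j ∧ ¬ (r ≠ 0 ∧ x ∈ T (r - 1) j)

def Low (T : ℕ → ℕ → Finset ℕ) (x r j : ℕ) : Prop := ∃ y ∈ T r j, y < x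

theorem TopE.unique {R C : ℕ} {T : ℕ → ℕ → Finset ℕ} (hN : Nice R C T) {x r r' j : ℕ}
    (h : TopE T x r j) (h' : TopE T x r' j) : r = r' := by
  have key : ∀ {r r'}, TopE T x r j → x ∈ T r' j → r ≤ r' := by
    intro r r' h h'
    by_contra hc
    obtain ⟨z, hz, h1, h2⟩ := hN.mid (r - 1) j (show r' ≤ r - 1 by omega)
      (show r - 1 ≤ r by omega) le_rfl le_rfl (by omega) h' h.1
    obtain rfl : z = x := by omega
    exact h.2 ⟨by omega, hz⟩
  exact le_antisymm (key h h'.1) (key h' h.1)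

theorem TopE.le {R C : ℕ} {T : ℕ → ℕ → Finset ℕ} (hN : Nice R C T) {x r r' j : ℕ}
    (h : TopE T x r j) (h' : x ∈ T r' j) : r ≤ r' := by
  by_contra hc
  obtain ⟨z, hz, h1, h2⟩ := hN.mid (r - 1) j (show r' ≤ r - 1 by omega)
    (show r - 1 ≤ r by omega) le_rfl le_rfl (by omega) h' h.1
  obtain rfl : z = x := by omega
  exact h.2 ⟨by omega, hz⟩

theorem exists_top {T : ℕ → ℕ → Finset ℕ} {x r j : ℕ} (h : x ∈ T r j) : ∃ r', TopE T x r' j := by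
  have hex : ∃ r, x ∈ T r j := ⟨r, h⟩
  refine ⟨Nat.find hex, Nat.find_spec hex, ?_⟩
  rintro ⟨h1, h2⟩
  exact Nat.find_min hex (by omega) h2

noncomputable def rowTag (C : ℕ) (T : ℕ → ℕ → Finset ℕ) (r : ℕ) : List (ℕ × Bool × ℕ × ℕ) :=
  (((List.range C).reverse).flatMap
      (fun j => (((T r j).sort (· ≤ ·)).tail.reverse).map (fun x => (r, false, x, j)))) ++
  ((List.range C).filterMap
      (fun j =>
        if h : (T r j).Nonempty then
          (if r ≠ 0 ∧ (T r j).min' h ∈ T (r - 1) j ∧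
              (∀ x ∈ T (r - 1) j, x ≤ (T r j).min' h)
           then none else some (r, true, (T r j).min' h, j))
        else none))

noncomputable def tagWord (R C : ℕ) (T : ℕ → ℕ → Finset ℕ) : List (ℕ × Bool × ℕ × ℕ) :=
  ((List.range R).reverse).flatMap (fun r => rowTag C T r)

theorem tagWord_map (R C : ℕ) (T : ℕ → ℕ → Finset ℕ) :
    (tagWord R C T).map (fun e => e.2.2.1) = readWord R C T := by
  unfold tagWord readWord
  rw [List.map_flatMap]
  congr 1
  funext r
  unfold rowTag rowRead
  rw [List.map_append, List.map_flatMap, List.map_filterMap]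
  congr 1
  · congr 1
    funext j
    rw [List.map_map]
    exact List.map_id _
  · congr 1
    funext j
    split_ifs <;> rfl

theorem mem_sort_tail (s : Finset ℕ) (x : ℕ) :
    x ∈ (s.sort (· ≤ ·)).tail ↔ x ∈ s ∧ ∃ y ∈ s, y < x := by
  have hs : (s.sort (· ≤ ·)).Pairwise (· < ·) := (Finset.sortedLT_sort s).pairwise
  have hm : ∀ y, y ∈ s ↔ y ∈ s.sort (· ≤ ·) := fun y => (Finset.mem_sort _).symm
  simp only [hm]
  cases h : s.sort (· ≤ ·) with
  | nil => simp
  | cons a l =>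
    rw [h] at hs
    rw [List.pairwise_cons] at hs
    simp only [List.tail_cons, List.mem_cons]
    constructor
    · intro hx
      exact ⟨Or.inr hx, a, Or.inl rfl, hs.1 x hx⟩
    · rintro ⟨rfl | hx, y, hy, hyx⟩
      · rcases hy with rfl | hy
        · omega
        · have := hs.1 y hy; omega
      · exact hx

theorem sort_tail_rev_pairwise (s : Finset ℕ) :
    ((s.sort (· ≤ ·)).tail.reverse).Pairwise (· > ·) := by
  rw [List.pairwise_reverse]
  exact ((Finset.sortedLT_sort s).pairwise).sublist (List.tail_sublist _)

theorem mem_rowTag {R C : ℕ} {T : ℕ → ℕ → Finset ℕ} (hN : Nice R C T) (r : ℕ)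
    (e : ℕ × Bool × ℕ × ℕ) :
    e ∈ rowTag C T r ↔ e.1 = r ∧ TopE T e.2.2.1 r e.2.2.2 ∧
      (e.2.1 = true ↔ ¬ Low T e.2.2.1 r e.2.2.2) := by
  obtain ⟨r', st, x, j⟩ := e
  unfold rowTag
  simp only [List.mem_append, List.mem_flatMap, List.mem_reverse, List.mem_range, List.mem_map,
    mem_sort_tail, List.mem_filterMap]
  constructor
  · rintro (⟨j', hj', x', ⟨hx, y, hy, hyx⟩, he⟩ | ⟨j', hj', he⟩)
    · obtain ⟨rfl, rfl, rfl, rfl⟩ : r = r' ∧ false = st ∧ x' = x ∧ j' = j := by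
        simpa using he
      refine ⟨rfl, ⟨hx, ?_⟩, ?_⟩
      · rintro ⟨h0, h1⟩
        have := hN.mono (show r - 1 ≤ r by omega) le_rfl (by omega) h1 hy
        omega
      · simp only [Bool.false_eq_true, false_iff, not_not]
        exact ⟨y, hy, hyx⟩
    · split_ifs at he with h1 h2
      obtain ⟨rfl, rfl, rfl, rfl⟩ :
          r = r' ∧ true = st ∧ (T r j').min' h1 = x ∧ j' = j := by
        simpa using he
      refine ⟨rfl, ⟨Finset.min'_mem _ _, ?_⟩, ?_⟩
      · rintro ⟨h3, h4⟩
        refine h2 ⟨h3, h4, ?_⟩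
        intro y hy
        exact hN.mono (show r - 1 ≤ r by omega) le_rfl (by omega) hy (Finset.min'_mem _ h1)
      · simp only [true_iff]
        rintro ⟨y, hy, hlt⟩
        have := Finset.min'_le _ y hy
        omega
  · rintro ⟨h1, h2, h3⟩
    subst h1
    have hb := hN.bd h2.1
    cases st with
    | false =>
      left
      refine ⟨j, hb.2, x, ⟨h2.1, ?_⟩, rfl⟩
      simpa [Low] using h3
    | true =>
      right
      refine ⟨j, hb.2, ?_⟩
      have hne : (T r' j).Nonempty := ⟨x, h2.1⟩
      have hmin : (T r' j).min' hne = x := by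
        apply le_antisymm (Finset.min'_le _ _ h2.1)
        by_contra hc
        exact (h3.1 rfl) ⟨_, Finset.min'_mem _ hne, by omega⟩
      rw [dif_pos hne, hmin, if_neg]
      rintro ⟨h4, h5, h6⟩
      exact h2.2 ⟨h4, h5⟩

theorem mem_tagWord {R C : ℕ} {T : ℕ → ℕ → Finset ℕ} (hN : Nice R C T)
    (e : ℕ × Bool × ℕ × ℕ) :
    e ∈ tagWord R C T ↔ TopE T e.2.2.1 e.1 e.2.2.2 ∧
      (e.2.1 = true ↔ ¬ Low T e.2.2.1 e.1 e.2.2.2) := by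
  unfold tagWord
  simp only [List.mem_flatMap, List.mem_reverse, List.mem_range, mem_rowTag hN]
  constructor
  · rintro ⟨r, hr, rfl, h⟩
    exact h
  · intro h
    exact ⟨e.1, (hN.bd h.1.1).1, rfl, h⟩

def Bef (e f : ℕ × Bool × ℕ × ℕ) : Prop :=
  f.1 < e.1 ∨ (e.1 = f.1 ∧ ((e.2.1 = false ∧ f.2.1 = true) ∨
    (e.2.1 = false ∧ f.2.1 = false ∧ f.2.2.1 < e.2.2.1) ∨
    (e.2.1 = true ∧ f.2.1 = true ∧ e.2.2.2 < f.2.2.2)))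

theorem rowTag_pairwise {R C : ℕ} {T : ℕ → ℕ → Finset ℕ} (hN : Nice R C T) (r : ℕ) :
    (rowTag C T r).Pairwise Bef := by
  unfold rowTag
  rw [List.pairwise_append]
  refine ⟨?_, ?_, ?_⟩
  · rw [List.pairwise_flatMap]
    constructor
    · intro j _
      rw [List.pairwise_map]
      refine (sort_tail_rev_pairwise _).imp ?_
      intro a b hab
      exact Or.inr ⟨rfl, Or.inr (Or.inl ⟨rfl, rfl, hab⟩)⟩
    · rw [List.pairwise_reverse]
      refine List.pairwise_lt_range.imp ?_
      intro j j' hjj e he f hf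
      simp only [List.mem_reverse, List.mem_map, mem_sort_tail] at he hf
      obtain ⟨x, ⟨hx, y, hy, hyx⟩, rfl⟩ := he
      obtain ⟨x', ⟨hx', y', hy', hyx'⟩, rfl⟩ := hf
      have := hN.mono (le_refl r) hjj.le (by omega) hx' hy
      exact Or.inr ⟨rfl, Or.inr (Or.inl ⟨rfl, rfl, by show x' < x; omega⟩)⟩
  · rw [List.pairwise_filterMap]
    refine List.pairwise_lt_range.imp ?_
    intro j j' hjj e he f hf
    split_ifs at he with h1 h2
    split_ifs at hf with h3 h4
    simp only [Option.some.injEq] at he hf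
    subst he hf
    exact Or.inr ⟨rfl, Or.inr (Or.inr ⟨rfl, rfl, hjj⟩)⟩
  · intro e he f hf
    simp only [List.mem_flatMap, List.mem_map] at he
    simp only [List.mem_filterMap] at hf
    obtain ⟨j, _, x, _, rfl⟩ := he
    obtain ⟨j', _, hf⟩ := hf
    split_ifs at hf with h1 h2
    simp only [Option.some.injEq] at hf
    subst hf
    exact Or.inr ⟨rfl, Or.inl ⟨rfl, rfl⟩⟩

theorem tagWord_pairwise {R C : ℕ} {T : ℕ → ℕ → Finset ℕ} (hN : Nice R C T) :
    (tagWord R C T).Pairwise Bef := by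
  unfold tagWord
  rw [List.pairwise_flatMap]
  refine ⟨fun r _ => rowTag_pairwise hN r, ?_⟩
  rw [List.pairwise_reverse]
  refine List.pairwise_lt_range.imp ?_
  intro r r' hrr e he f hf
  rw [mem_rowTag hN] at he hf
  exact Or.inl (by omega)

theorem Bef.irrefl (e : ℕ × Bool × ℕ × ℕ) : ¬ Bef e e := by
  obtain ⟨r, st, x, j⟩ := e
  unfold Bef
  cases st <;> simp

theorem Bef.asymm {e f : ℕ × Bool × ℕ × ℕ} (h : Bef e f) : ¬ Bef f e := by
  obtain ⟨r, st, x, j⟩ := e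
  obtain ⟨r', st', x', j'⟩ := f
  unfold Bef at *
  cases st <;> cases st' <;> simp at * <;> omega

theorem tagWord_nodup {R C : ℕ} {T : ℕ → ℕ → Finset ℕ} (hN : Nice R C T) :
    (tagWord R C T).Nodup := by
  refine (tagWord_pairwise hN).imp ?_
  rintro e f h rfl
  exact Bef.irrefl _ h

def PB (i : ℕ) (T : ℕ → ℕ → Finset ℕ) (j : ℕ) : Prop := (∃ r, i + 1 ∈ T r j) ∧ ∀ r, i ∉ T r j

def PA (i : ℕ) (T : ℕ → ℕ → Finset ℕ) (j : ℕ) : Prop := (∃ r, i ∈ T r j) ∧ ∀ r, i + 1 ∉ T r j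

theorem colPureB_iff (i : ℕ) (T : ℕ → ℕ → Finset ℕ) (j : ℕ) :
    ColPureB i (restrictTwo i T) j ↔ PB i T j := by
  simp [ColPureB, ColHas, restrictTwo, PB]

theorem colPureA_iff (i : ℕ) (T : ℕ → ℕ → Finset ℕ) (j : ℕ) :
    ColPureA i (restrictTwo i T) j ↔ PA i T j := by
  simp [ColPureA, ColHas, restrictTwo, PA]

noncomputable def cB (i C : ℕ) (T : ℕ → ℕ → Finset ℕ) (p : ℕ) : Finset ℕ :=
  (Finset.range C).filter (fun j => p ≤ j ∧ PB i T j)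

noncomputable def cA (i C : ℕ) (T : ℕ → ℕ → Finset ℕ) (p : ℕ) : Finset ℕ :=
  (Finset.range C).filter (fun j => p ≤ j ∧ PA i T j)

theorem mem_cB {R C : ℕ} {T : ℕ → ℕ → Finset ℕ} (hN : Nice R C T) (i p j : ℕ) :
    j ∈ cB i C T p ↔ p ≤ j ∧ PB i T j := by
  unfold cB
  rw [Finset.mem_filter, Finset.mem_range]
  constructor
  · exact fun h => h.2
  · intro h
    obtain ⟨r, hr⟩ := h.2.1
    exact ⟨(hN.bd hr).2, h⟩

theorem mem_cA {R C : ℕ} {T : ℕ → ℕ → Finset ℕ} (hN : Nice R C T) (i p j : ℕ) :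
    j ∈ cA i C T p ↔ p ≤ j ∧ PA i T j := by
  unfold cA
  rw [Finset.mem_filter, Finset.mem_range]
  constructor
  · exact fun h => h.2
  · intro h
    obtain ⟨r, hr⟩ := h.2.1
    exact ⟨(hN.bd hr).2, h⟩

theorem fsuffix_eq {R C : ℕ} {T : ℕ → ℕ → Finset ℕ} (hN : Nice R C T) (i p : ℕ) :
    fsuffix i T p = ((cB i C T p).card : ℤ) - ((cA i C T p).card : ℤ) := by
  unfold fsuffix
  rw [← Set.ncard_coe_finset, ← Set.ncard_coe_finset]
  congr 3
  · ext j
    simp only [Set.mem_ofPred_eq, Finset.mem_coe, mem_cB hN, colPureB_iff]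
  · ext j
    simp only [Set.mem_ofPred_eq, Finset.mem_coe, mem_cA hN, colPureA_iff]

theorem fsuffix_big {R C : ℕ} {T : ℕ → ℕ → Finset ℕ} (hN : Nice R C T) (i p : ℕ) (hp : C ≤ p) :
    fsuffix i T p = 0 := by
  have h1 : cB i C T p = ∅ := by
    ext j
    simp [cB]; omega
  have h2 : cA i C T p = ∅ := by
    ext j
    simp [cA]; omega
  rw [fsuffix_eq hN, h1, h2]; simp

theorem PA_not_PB {i : ℕ} {T : ℕ → ℕ → Finset ℕ} {j : ℕ} (h : PA i T j) : ¬ PB i T j := by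
  intro h'
  obtain ⟨r, hr⟩ := h'.1
  exact h.2 r hr

theorem fsuffix_succ {R C : ℕ} {T : ℕ → ℕ → Finset ℕ} (hN : Nice R C T) (i p : ℕ) :
    (PB i T p → fsuffix i T p = fsuffix i T (p + 1) + 1) ∧
    (¬ PB i T p → fsuffix i T p ≤ fsuffix i T (p + 1)) ∧
    (¬ PA i T p → fsuffix i T (p + 1) ≤ fsuffix i T p) := by
  have eB : ¬ PB i T p → cB i C T p = cB i C T (p + 1) := by
    intro h
    ext j
    rw [mem_cB hN, mem_cB hN]
    constructor
    · rintro ⟨h1, h2⟩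
      refine ⟨?_, h2⟩
      by_contra hc
      obtain rfl : j = p := by omega
      exact h h2
    · rintro ⟨h1, h2⟩
      exact ⟨by omega, h2⟩
  have eA : ¬ PA i T p → cA i C T p = cA i C T (p + 1) := by
    intro h
    ext j
    rw [mem_cA hN, mem_cA hN]
    constructor
    · rintro ⟨h1, h2⟩
      refine ⟨?_, h2⟩
      by_contra hc
      obtain rfl : j = p := by omega
      exact h h2
    · rintro ⟨h1, h2⟩
      exact ⟨by omega, h2⟩
  have sB : (cB i C T (p + 1)).card ≤ (cB i C T p).card := by
    apply Finset.card_le_card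
    intro j
    rw [mem_cB hN, mem_cB hN]
    rintro ⟨h1, h2⟩
    exact ⟨by omega, h2⟩
  have sA : (cA i C T (p + 1)).card ≤ (cA i C T p).card := by
    apply Finset.card_le_card
    intro j
    rw [mem_cA hN, mem_cA hN]
    rintro ⟨h1, h2⟩
    exact ⟨by omega, h2⟩
  rw [fsuffix_eq hN, fsuffix_eq hN]
  refine ⟨?_, ?_, ?_⟩
  · intro h
    have h1 : ¬ PA i T p := fun h' => PA_not_PB h' h
    rw [eA h1]
    have : cB i C T p = insert p (cB i C T (p + 1)) := by
      ext j
      rw [Finset.mem_insert, mem_cB hN, mem_cB hN]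
      constructor
      · rintro ⟨h1, h2⟩
        by_cases hj : j = p
        · exact Or.inl hj
        · exact Or.inr ⟨by omega, h2⟩
      · rintro (rfl | ⟨h1, h2⟩)
        · exact ⟨le_rfl, h⟩
        · exact ⟨by omega, h2⟩
    rw [this, Finset.card_insert_of_notMem]
    · push_cast; ring
    · rw [mem_cB hN]; omega
  · intro h
    rw [eB h]; omega
  · intro h
    rw [eA h]; omega

theorem lum_exists {R C : ℕ} {T : ℕ → ℕ → Finset ℕ} (hN : Nice R C T) (i c : ℕ)
    (hc : 1 ≤ fsuffix i T c) : ∃ A, LeftmostUnpairedMinus i T A := by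
  have hne : (Finset.range (C + 1)).Nonempty := ⟨0, by simp⟩
  obtain ⟨m, hm, hmax⟩ := Finset.exists_max_image (Finset.range (C + 1)) (fsuffix i T) hne
  have hall : ∀ p, fsuffix i T p ≤ fsuffix i T m := by
    intro p
    by_cases hp : p < C + 1
    · exact hmax p (Finset.mem_range.2 hp)
    · have h1 := hmax C (by simp)
      rw [fsuffix_big hN i C le_rfl] at h1
      rw [fsuffix_big hN i p (by omega)]
      exact h1
  have hF : ((Finset.range (C + 1)).filter (fun p => fsuffix i T p = fsuffix i T m)).Nonempty :=
    ⟨m, by simp only [Finset.mem_filter]; exact ⟨hm, trivial⟩⟩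
  obtain ⟨A, hA, hAmax⟩ := Finset.exists_max_image _ id hF
  rw [Finset.mem_filter] at hA
  have hlt : ∀ p, A < p → fsuffix i T p < fsuffix i T A := by
    intro p hp
    rw [hA.2]
    refine lt_of_le_of_ne (hall p) ?_
    intro he
    by_cases hpC : p < C + 1
    · have := hAmax p (by rw [Finset.mem_filter, Finset.mem_range]; exact ⟨hpC, he⟩)
      simp only [id] at this
      omega
    · rw [fsuffix_big hN i p (by omega)] at he
      have := hall c
      omega
  refine ⟨A, ?_, ?_, hlt⟩
  · rw [colPureB_iff]
    by_contra h
    have h1 := (fsuffix_succ hN i A).2.1 h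
    have h2 := hlt (A + 1) (by omega)
    omega
  · intro p
    rw [hA.2]
    exact hall p

noncomputable def colset (V : List (ℕ × Bool × ℕ × ℕ)) (x : ℕ) : Finset ℕ :=
  ((V.filter (fun e => e.2.2.1 = x)).map (fun e => e.2.2.2)).toFinset

theorem mem_colset (V : List (ℕ × Bool × ℕ × ℕ)) (x j : ℕ) :
    j ∈ colset V x ↔ ∃ r st, (r, st, x, j) ∈ V := by
  unfold colset
  simp only [List.mem_toFinset, List.mem_map, List.mem_filter, decide_eq_true_eq]
  constructor
  · rintro ⟨⟨r, st, x', j'⟩, ⟨h1, h2⟩, h3⟩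
    simp only at h2 h3
    subst h2 h3
    exact ⟨r, st, h1⟩
  · rintro ⟨r, st, h⟩
    exact ⟨_, ⟨h, rfl⟩, rfl⟩

theorem tag_ext {R C : ℕ} {T : ℕ → ℕ → Finset ℕ} (hN : Nice R C T)
    {r r' : ℕ} {st st' : Bool} {x j : ℕ} (h : (r, st, x, j) ∈ tagWord R C T)
    (h' : (r', st', x, j) ∈ tagWord R C T) : r = r' ∧ st = st' := by
  rw [mem_tagWord hN] at h h'
  have := TopE.unique hN h.1 h'.1
  simp only at this h h'
  subst this
  refine ⟨rfl, ?_⟩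
  have := h.2.trans h'.2.symm
  exact Bool.eq_iff_iff.2 this

theorem count_colset {R C : ℕ} {T : ℕ → ℕ → Finset ℕ} (hN : Nice R C T)
    {V : List (ℕ × Bool × ℕ × ℕ)} (hV : V.Sublist (tagWord R C T)) (x : ℕ) :
    (V.map (fun e => e.2.2.1)).count x = (colset V x).card := by
  unfold colset
  rw [List.toFinset_card_of_nodup]
  · rw [List.length_map, List.count, List.countP_map, List.countP_eq_length_filter]
    congr 1
  · apply List.Nodup.map_on
    · rintro ⟨r, st, y, j⟩ he ⟨r', st', y', j'⟩ hf hj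
      simp only [List.mem_filter, decide_eq_true_eq] at he hf hj
      obtain ⟨he, rfl⟩ := he
      obtain ⟨hf, rfl⟩ := hf
      subst hj
      obtain ⟨rfl, rfl⟩ := tag_ext hN (hV.subset he) (hV.subset hf)
      rfl
    · exact ((tagWord_nodup hN).sublist hV).filter _

/-- The statistic of a suffix. -/
theorem stat_eq {R C : ℕ} {T : ℕ → ℕ → Finset ℕ} (hN : Nice R C T)
    {V : List (ℕ × Bool × ℕ × ℕ)} (hV : V.Sublist (tagWord R C T)) (i : ℕ) :
    ((V.map (fun e => e.2.2.1)).count (i + 1) : ℤ) - ((V.map (fun e => e.2.2.1)).count i : ℤ) =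
    ((colset V (i + 1) \ colset V i).card : ℤ) - ((colset V i \ colset V (i + 1)).card : ℤ) := by
  rw [count_colset hN hV, count_colset hN hV]
  have h1 := Finset.card_sdiff_add_card_inter (colset V (i + 1)) (colset V i)
  have h2 := Finset.card_sdiff_add_card_inter (colset V i) (colset V (i + 1))
  rw [Finset.inter_comm] at h2
  omega

theorem exists_tag {R C : ℕ} {T : ℕ → ℕ → Finset ℕ} (hN : Nice R C T) {x r j : ℕ}
    (h : x ∈ T r j) : ∃ r' st, (r', st, x, j) ∈ tagWord R C T := by
  obtain ⟨r', h'⟩ := exists_top h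
  by_cases hl : Low T x r' j
  · exact ⟨r', false, by rw [mem_tagWord hN]; simp [h', hl]⟩
  · exact ⟨r', true, by rw [mem_tagWord hN]; simp [h', hl]⟩

theorem in_suffix {R C : ℕ} {T : ℕ → ℕ → Finset ℕ} (hN : Nice R C T)
    {U V : List (ℕ × Bool × ℕ × ℕ)} (hUV : tagWord R C T = U ++ V)
    {e f : ℕ × Bool × ℕ × ℕ} (he : e ∈ V) (hf : f ∈ tagWord R C T) (h : ¬ Bef f e) : f ∈ V := by
  have hp := tagWord_pairwise hN
  rw [hUV, List.pairwise_append] at hp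
  rw [hUV, List.mem_append] at hf
  rcases hf with hf | hf
  · exact absurd (hp.2.2 f hf e he) h
  · exact hf

theorem mixed_order {R C : ℕ} {T : ℕ → ℕ → Finset ℕ} (hN : Nice R C T) {i j r r' : ℕ}
    {st st' : Bool} (h : (r, st, i + 1, j) ∈ tagWord R C T)
    (h' : (r', st', i, j) ∈ tagWord R C T) : ¬ Bef (r', st', i, j) (r, st, i + 1, j) := by
  rw [mem_tagWord hN] at h h'
  simp only at h h'
  rintro (hb | ⟨h1, h2⟩)
  · simp only at hb
    have := hN.mono hb.le (le_refl j) (Or.inl hb) h.1.1 h'.1.1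
    omega
  · simp only at h1 h2
    subst h1
    rcases h2 with ⟨_, h3⟩ | ⟨_, _, h3⟩ | ⟨_, _, h3⟩
    · exact h.2.1 h3 ⟨i, h'.1.1, by omega⟩
    · omega
    · omega

theorem pure_order {R C : ℕ} {T : ℕ → ℕ → Finset ℕ} (hN : Nice R C T) {i j j' r r' x x' : ℕ}
    {st st' : Bool} (h : (r, st, x, j) ∈ tagWord R C T)
    (h' : (r', st', x', j') ∈ tagWord R C T) (hx : x = i ∨ x = i + 1) (hx' : x' = i ∨ x' = i + 1)
    (hp : PA i T j' ∨ PB i T j') (hj : j < j') :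
    ¬ Bef (r', st', x', j') (r, st, x, j) := by
  rw [mem_tagWord hN] at h h'
  simp only at h h'
  have hpure : ∀ s y, (y = i ∨ y = i + 1) → y ∈ T s j' → y = x' := by
    intro s y hy hm
    rcases hp with hp | hp
    · have h1 : y ≠ i + 1 := fun h => hp.2 s (h ▸ hm)
      have h2 : x' ≠ i + 1 := fun h => hp.2 r' (h ▸ h'.1.1)
      omega
    · have h1 : y ≠ i := fun h => hp.2 s (h ▸ hm)
      have h2 : x' ≠ i := fun h => hp.2 r' (h ▸ h'.1.1)
      omega
  have hlow : r = r' → Low T x' r' j' → False := by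
    rintro rfl ⟨y, hy, hyx⟩
    have h1 := hN.mono (le_refl r) hj.le (Or.inr hj) h.1.1 hy
    have := hpure r y (by omega) hy
    omega
  rintro (hb | ⟨h1, h2⟩)
  · simp only at hb
    obtain ⟨z, hz, hz1, hz2⟩ := hN.mid r j' le_rfl hb.le hj.le le_rfl (Or.inl hb) h.1.1 h'.1.1
    have := hpure r z (by omega) hz
    subst this
    have := TopE.le hN h'.1 hz
    omega
  · simp only at h1 h2
    subst h1
    rcases h2 with ⟨h3, _⟩ | ⟨h3, _, _⟩ | ⟨_, _, h3⟩
    · subst h3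
      exact hlow rfl (by simpa using h'.2)
    · subst h3
      exact hlow rfl (by simpa using h'.2)
    · omega

theorem exists_pure_tag {R C : ℕ} {T : ℕ → ℕ → Finset ℕ} (hN : Nice R C T) {i j : ℕ}
    (hp : PA i T j ∨ PB i T j) : ∃ r st x, (r, st, x, j) ∈ tagWord R C T ∧ (x = i ∨ x = i + 1) := by
  rcases hp with hp | hp
  · obtain ⟨r, hr⟩ := hp.1
    obtain ⟨r', st, h⟩ := exists_tag hN hr
    exact ⟨r', st, _, h, Or.inl rfl⟩
  · obtain ⟨r, hr⟩ := hp.1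
    obtain ⟨r', st, h⟩ := exists_tag hN hr
    exact ⟨r', st, _, h, Or.inr rfl⟩

theorem stat_le {R C : ℕ} {T : ℕ → ℕ → Finset ℕ} (hN : Nice R C T) (i : ℕ)
    {U V : List (ℕ × Bool × ℕ × ℕ)} (hUV : tagWord R C T = U ++ V) (c : ℕ)
    (hc : ∀ j, (PA i T j ∨ PB i T j) →
      (c ≤ j ↔ ∃ r st x, (r, st, x, j) ∈ V ∧ (x = i ∨ x = i + 1))) :
    ((V.map (fun e => e.2.2.1)).count (i + 1) : ℤ) - ((V.map (fun e => e.2.2.1)).count i : ℤ) ≤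
      fsuffix i T c := by
  have hsub : V.Sublist (tagWord R C T) := hUV ▸ List.sublist_append_right U V
  rw [stat_eq hN hsub, fsuffix_eq hN]
  have h1 : (colset V (i + 1) \ colset V i).card ≤ (cB i C T c).card := by
    apply Finset.card_le_card
    intro j
    rw [Finset.mem_sdiff, mem_colset, mem_colset, mem_cB hN]
    rintro ⟨⟨r, st, h⟩, h2⟩
    have hpb : PB i T j := by
      refine ⟨⟨r, ((mem_tagWord hN _).1 (hsub.subset h)).1.1⟩, ?_⟩
      intro s hs
      obtain ⟨r', st', h'⟩ := exists_tag hN hs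
      exact h2 ⟨r', st', in_suffix hN hUV h h' (mixed_order hN (hsub.subset h) h')⟩
    exact ⟨(hc j (Or.inr hpb)).2 ⟨r, st, _, h, Or.inr rfl⟩, hpb⟩
  have h2 : (cA i C T c).card ≤ (colset V i \ colset V (i + 1)).card := by
    apply Finset.card_le_card
    intro j
    rw [Finset.mem_sdiff, mem_colset, mem_colset, mem_cA hN]
    rintro ⟨h1, h2⟩
    have hno : ∀ r st, (r, st, i + 1, j) ∉ V := fun r st h =>
      h2.2 r ((mem_tagWord hN _).1 (hsub.subset h)).1.1
    obtain ⟨r, st, x, h, rfl | rfl⟩ := (hc j (Or.inl h2)).1 h1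
    · exact ⟨⟨r, st, h⟩, fun ⟨r', st', h'⟩ => hno r' st' h'⟩
    · exact absurd h (hno r st)
  omega

theorem exists_threshold {R C : ℕ} {T : ℕ → ℕ → Finset ℕ} (hN : Nice R C T) (i : ℕ)
    {U V : List (ℕ × Bool × ℕ × ℕ)} (hUV : tagWord R C T = U ++ V) :
    ∃ c, (c = C ∨ ((PA i T c ∨ PB i T c) ∧
        ∃ r st x, (r, st, x, c) ∈ V ∧ (x = i ∨ x = i + 1))) ∧
      ∀ j, (PA i T j ∨ PB i T j) →
      (c ≤ j ↔ ∃ r st x, (r, st, x, j) ∈ V ∧ (x = i ∨ x = i + 1)) := by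
  have hsub : V.Sublist (tagWord R C T) := hUV ▸ List.sublist_append_right U V
  by_cases hex : ∃ c, (PA i T c ∨ PB i T c) ∧
        ∃ r st x, (r, st, x, c) ∈ V ∧ (x = i ∨ x = i + 1)
  · obtain ⟨hp, r, st, x, he, hx⟩ := Nat.find_spec hex
    refine ⟨Nat.find hex, Or.inr (Nat.find_spec hex), ?_⟩
    intro j hj
    constructor
    · intro hle
      rcases hle.lt_or_eq with hlt | heq
      · obtain ⟨r', st', x', h', hx'⟩ := exists_pure_tag hN hj
        exact ⟨r', st', x', in_suffix hN hUV he h'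
          (pure_order hN (hsub.subset he) h' hx hx' hj hlt), hx'⟩
      · rw [← heq]; exact ⟨r, st, x, he, hx⟩
    · intro h
      exact Nat.find_min' hex ⟨hj, h⟩
  · refine ⟨C, Or.inl rfl, ?_⟩
    intro j hj
    constructor
    · intro hle
      obtain ⟨r', st', x', h', hx'⟩ := exists_pure_tag hN hj
      have := (hN.bd ((mem_tagWord hN _).1 h').1.1).2
      simp only at this
      omega
    · intro h
      exact absurd ⟨j, hj, h⟩ hex

theorem stat_head {R C : ℕ} {T : ℕ → ℕ → Finset ℕ} (hN : Nice R C T) (i : ℕ)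
    {U V : List (ℕ × Bool × ℕ × ℕ)} {r0 A : ℕ} {st0 : Bool}
    (hUV : tagWord R C T = U ++ (r0, st0, i + 1, A) :: V) (hA : PB i T A) :
    ((((r0, st0, i + 1, A) :: V).map (fun e => e.2.2.1)).count (i + 1) : ℤ) -
      ((((r0, st0, i + 1, A) :: V).map (fun e => e.2.2.1)).count i : ℤ) =
      fsuffix i T A := by
  have hsub : ((r0, st0, i + 1, A) :: V).Sublist (tagWord R C T) :=
    hUV ▸ List.sublist_append_right U _
  have hpw := tagWord_pairwise hN
  rw [hUV, List.pairwise_append, List.pairwise_cons] at hpw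
  obtain ⟨-, ⟨hAV, -⟩, hUA⟩ := hpw
  have heA : (r0, st0, i + 1, A) ∈ tagWord R C T := hsub.subset List.mem_cons_self
  have heA' := (mem_tagWord hN _).1 heA
  simp only at heA'
  have hc : ∀ j, (PA i T j ∨ PB i T j) →
      (A ≤ j ↔ ∃ r st x, (r, st, x, j) ∈ (r0, st0, i + 1, A) :: V ∧ (x = i ∨ x = i + 1)) := by
    intro j hj
    obtain ⟨r', st', x', h', hx'⟩ := exists_pure_tag hN hj
    constructor
    · intro hle
      rcases hle.lt_or_eq with hlt | rfl
      · exact ⟨r', st', x', in_suffix hN hUV List.mem_cons_self h'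
          (pure_order hN heA h' (Or.inr rfl) hx' hj hlt), hx'⟩
      · exact ⟨_, _, _, List.mem_cons_self, Or.inr rfl⟩
    · rintro ⟨r, st, x, h, hx⟩
      by_contra hlt
      rcases List.mem_cons.1 h with h1 | h1
      · simp only [Prod.mk.injEq] at h1
        omega
      · exact pure_order hN (hsub.subset h) heA hx (Or.inr rfl) (Or.inr hA) (by omega)
          (hAV _ h1)
  apply le_antisymm (stat_le hN i hUV A hc)
  rw [stat_eq hN hsub, fsuffix_eq hN]
  set V' := (r0, st0, i + 1, A) :: V with hV'
  have h1 : (cB i C T A).card ≤ (colset V' (i + 1) \ colset V' i).card := by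
    apply Finset.card_le_card
    intro j
    rw [Finset.mem_sdiff, mem_colset, mem_colset, mem_cB hN]
    rintro ⟨h1, h2⟩
    have hno : ∀ r st, (r, st, i, j) ∉ V' := fun r st h =>
      h2.2 r ((mem_tagWord hN _).1 (hsub.subset h)).1.1
    obtain ⟨r, st, x, h, rfl | rfl⟩ := (hc j (Or.inr h2)).1 h1
    · exact absurd h (hno r st)
    · exact ⟨⟨r, st, h⟩, fun ⟨r', st', h'⟩ => hno r' st' h'⟩
  have h2 : (colset V' i \ colset V' (i + 1)).card ≤ (cA i C T A).card := by
    apply Finset.card_le_card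
    intro j
    rw [Finset.mem_sdiff, mem_colset, mem_colset, mem_cA hN]
    rintro ⟨⟨t, st, hg⟩, h2⟩
    have hg' := (mem_tagWord hN _).1 (hsub.subset hg)
    simp only at hg'
    have hpa : PA i T j := by
      refine ⟨⟨t, hg'.1.1⟩, ?_⟩
      intro s hs
      obtain ⟨s', st', hf⟩ := exists_tag hN hs
      have hfU : (s', st', i + 1, j) ∈ U := by
        rw [hUV, List.mem_append] at hf
        rcases hf with hf | hf
        · exact hf
        · exact absurd ⟨_, _, hf⟩ h2
      have hf' := (mem_tagWord hN _).1 hf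
      simp only at hf'
      have hb1 := hUA _ hfU _ List.mem_cons_self
      have hb2 : Bef (r0, st0, i + 1, A) (t, st, i, j) := by
        rcases List.mem_cons.1 hg with h1 | h1
        · simp only [Prod.mk.injEq] at h1
          omega
        · exact hAV _ h1
      rcases lt_trichotomy j A with hj | rfl | hj
      · have hlow : t = r0 → Low T (i + 1) r0 A → False := by
          rintro rfl ⟨y, hy, hyx⟩
          have := hN.mono (le_refl t) hj.le (Or.inr hj) hg'.1.1 hy
          obtain rfl : y = i := by omega
          exact hA.2 _ hy
        rcases hb2 with hb | ⟨he, hb⟩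
        · simp only at hb
          obtain ⟨z, hz, hz1, hz2⟩ := hN.mid t A le_rfl hb.le hj.le le_rfl (Or.inl hb)
            hg'.1.1 heA'.1.1
          have : z ≠ i := fun h => hA.2 t (h ▸ hz)
          obtain rfl : z = i + 1 := by omega
          have := TopE.le hN heA'.1 hz
          omega
        · simp only at he hb
          rcases hb with ⟨h3, _⟩ | ⟨h3, _, _⟩ | ⟨_, _, h3⟩
          · subst h3
            exact hlow he.symm (by simpa using heA'.2)
          · subst h3
            exact hlow he.symm (by simpa using heA'.2)
          · omega
      · exact hA.2 _ hg'.1.1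
      · rcases hb1 with hb | ⟨he, hb⟩
        · simp only at hb
          obtain ⟨z, hz, hz1, hz2⟩ := hN.mid r0 j le_rfl hb.le hj.le le_rfl (Or.inl hb)
            heA'.1.1 hf'.1.1
          obtain rfl : z = i + 1 := by omega
          have := TopE.le hN hf'.1 hz
          omega
        · simp only at he hb
          subst he
          rcases hb with ⟨h3, _⟩ | ⟨h3, _, h4⟩ | ⟨_, _, h3⟩
          · subst h3
            obtain ⟨y, hy, hyx⟩ : Low T (i + 1) s' j := by simpa using hf'.2
            have := hN.mono (le_refl s') hj.le (Or.inr hj) heA'.1.1 hy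
            omega
          · omega
          · omega
    exact ⟨(hc j (Or.inl hpa)).2 ⟨t, st, i, hg, Or.inl rfl⟩, hpa⟩
  omega

theorem wordF_eq {R C : ℕ} {T : ℕ → ℕ → Finset ℕ} (i q : ℕ) :
    wordF i (readWord R C T) q =
      ((((tagWord R C T).drop q).map (fun e => e.2.2.1)).count (i + 1) : ℤ) -
      ((((tagWord R C T).drop q).map (fun e => e.2.2.1)).count i : ℤ) := by
  unfold wordF
  rw [← tagWord_map, List.map_drop]

theorem EWord_ne_none {R C : ℕ} {T : ℕ → ℕ → Finset ℕ} (hN : Nice R C T) {i : ℕ}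
    (h : EWord i (readWord R C T) ≠ none) : ∃ A, LeftmostUnpairedMinus i T A := by
  unfold EWord at h
  split_ifs at h with hex
  · obtain ⟨p, _, _, hp⟩ := hex
    rw [wordF_eq] at hp
    obtain ⟨c, -, hc⟩ := exists_threshold hN i (List.take_append_drop p (tagWord R C T)).symm
    have := stat_le hN i (List.take_append_drop p (tagWord R C T)).symm c hc
    exact lum_exists hN i c (hp.trans this)
  · exact absurd rfl h

theorem EWord_some {R C : ℕ} {T : ℕ → ℕ → Finset ℕ} (hN : Nice R C T) {i : ℕ}
    {U V : List (ℕ × Bool × ℕ × ℕ)} {r0 A : ℕ} {st0 : Bool}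
    (hUV : tagWord R C T = U ++ (r0, st0, i + 1, A) :: V) (hA : LeftmostUnpairedMinus i T A) :
    EWord i (readWord R C T) =
      some (U.map (fun e => e.2.2.1) ++ i :: V.map (fun e => e.2.2.1)) := by
  obtain ⟨hPB, hmax, hlt⟩ := hA
  rw [colPureB_iff] at hPB
  have heA : (r0, st0, i + 1, A) ∈ tagWord R C T := by rw [hUV]; simp
  have hAC : A < C := (hN.bd ((mem_tagWord hN _).1 heA).1.1).2
  have hpw := tagWord_pairwise hN
  rw [hUV, List.pairwise_append, List.pairwise_cons] at hpw
  obtain ⟨-, ⟨hAV, -⟩, hUA⟩ := hpw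
  have hp : wordF i (readWord R C T) U.length = fsuffix i T A := by
    rw [wordF_eq, ← stat_head hN i hUV hPB, hUV, List.drop_left]
  have hle : ∀ q, wordF i (readWord R C T) q ≤ wordF i (readWord R C T) U.length := by
    intro q
    obtain ⟨c, -, hc⟩ := exists_threshold hN i (List.take_append_drop q (tagWord R C T)).symm
    have := stat_le hN i (List.take_append_drop q (tagWord R C T)).symm c hc
    rw [hp, wordF_eq]
    exact this.trans (hmax c)
  have hlt' : ∀ q, U.length < q →
      wordF i (readWord R C T) q < wordF i (readWord R C T) U.length := by
    intro q hq
    obtain ⟨c, hc0, hc⟩ := exists_threshold hN i (List.take_append_drop q (tagWord R C T)).symm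
    have := stat_le hN i (List.take_append_drop q (tagWord R C T)).symm c hc
    rw [hp, wordF_eq]
    refine lt_of_le_of_lt this (hlt c ?_)
    rcases hc0 with rfl | ⟨hcp, r, st, x, he, hx⟩
    · exact hAC
    · have heW : (r, st, x, c) ∈ tagWord R C T := List.mem_of_mem_drop he
      have heV : (r, st, x, c) ∈ V := by
        obtain ⟨d, rfl⟩ := Nat.exists_eq_add_of_lt hq
        rw [hUV, add_assoc, List.drop_append, List.drop_eq_nil_of_le (by omega)] at he
        simp only [Nat.add_sub_cancel_left, List.drop_succ_cons, List.nil_append] at he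
        exact List.mem_of_mem_drop he
      have hb := hAV _ heV
      rcases lt_trichotomy c A with h | rfl | h
      · exact absurd hb (pure_order hN heW heA hx (Or.inr rfl) (Or.inr hPB) h)
      · rcases hx with rfl | rfl
        · exact absurd ((mem_tagWord hN _).1 heW).1.1 (hPB.2 _)
        · obtain ⟨rfl, rfl⟩ := tag_ext hN heW heA
          exact absurd hb (Bef.irrefl _)
      · exact h
  have h1 : 1 ≤ wordF i (readWord R C T) U.length := by
    have := hlt (A + C + 1) (by omega)
    rw [fsuffix_big hN i _ (by omega)] at this
    omega
  have hex : ∃ p, (∀ q, wordF i (readWord R C T) q ≤ wordF i (readWord R C T) p) ∧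
      (∀ q, p < q → wordF i (readWord R C T) q < wordF i (readWord R C T) p) ∧
      1 ≤ wordF i (readWord R C T) p := ⟨U.length, hle, hlt', h1⟩
  unfold EWord
  rw [dif_pos hex]
  have huniq : hex.choose = U.length := by
    obtain ⟨g1, g2, -⟩ := hex.choose_spec
    rcases lt_trichotomy hex.choose U.length with h | h | h
    · have := g2 _ h
      have := hle hex.choose
      omega
    · exact h
    · have := hlt' _ h
      have := g1 U.length
      omega
  rw [huniq, ← tagWord_map, hUV]
  simp

/-! ### explicit form of the resolved tableaux -/

noncomputable def Sk (i A : ℕ) (S : ℕ → ℕ → Finset ℕ) (k : ℕ) : ℕ → ℕ → Finset ℕ :=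
  fun r j =>
    if j < k ∨ A < j then S r j
    else if j = k then (S r j).image (fun _ => i)
    else if (S r j).Nonempty then
      (if r < sep i S (j - 1) then {i}
       else if r = sep i S (j - 1) then S r (j - 1)
       else {i + 1})
    else ∅

def NN (i : ℕ) (T : ℕ → ℕ → Finset ℕ) (r j : ℕ) : Prop := i ∈ T r j ∨ i + 1 ∈ T r j

theorem mem_restrict (i : ℕ) (T : ℕ → ℕ → Finset ℕ) (r j x : ℕ) :
    x ∈ restrictTwo i T r j ↔ x ∈ T r j ∧ (x = i ∨ x = i + 1) := by
  simp [restrictTwo]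

theorem restrict_nonempty (i : ℕ) (T : ℕ → ℕ → Finset ℕ) (r j : ℕ) :
    (restrictTwo i T r j).Nonempty ↔ NN i T r j := by
  constructor
  · rintro ⟨x, hx⟩
    rw [mem_restrict] at hx
    rcases hx with ⟨h, rfl | rfl⟩
    · exact Or.inl h
    · exact Or.inr h
  · rintro (h | h)
    · exact ⟨i, by rw [mem_restrict]; simp [h]⟩
    · exact ⟨i + 1, by rw [mem_restrict]; simp [h]⟩

structure ResInv (i A : ℕ) (T : ℕ → ℕ → Finset ℕ) (k : ℕ) : Prop where
  le : k ≤ A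
  mixA : ∀ j, k ≤ j → j < A → ∃ r, i ∈ T r j
  link : ∀ j, k ≤ j → j < A → ∃ r, i + 1 ∈ T r j ∧ NN i T r (j + 1)

theorem sep_spec {i : ℕ} {T : ℕ → ℕ → Finset ℕ} {j : ℕ} (h : ∃ r, i + 1 ∈ T r j) :
    i + 1 ∈ T (sep i (restrictTwo i T) j) j ∧
    ∀ r, i + 1 ∈ T r j → sep i (restrictTwo i T) j ≤ r := by
  have hset : {r : ℕ | i + 1 ∈ restrictTwo i T r j} = {r : ℕ | i + 1 ∈ T r j} := by
    ext r
    simp [mem_restrict]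
  unfold sep
  rw [hset]
  exact ⟨Nat.sInf_mem (s := {r : ℕ | i + 1 ∈ T r j}) h, fun r hr => Nat.sInf_le hr⟩

theorem raise_eq {i A : ℕ} {T : ℕ → ℕ → Finset ℕ} :
    raiseCol i A (restrictTwo i T) = Sk i A (restrictTwo i T) A := by
  funext r j
  unfold raiseCol Sk
  by_cases hj : j = A
  · subst hj
    simp only [lt_irrefl, or_self, if_true, if_false]
    apply Finset.image_congr
    intro x hx
    rw [Finset.mem_coe, mem_restrict] at hx
    rcases hx.2 with rfl | rfl <;> simp
  · rw [if_neg hj, if_pos (by omega)]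

/-- membership in `Sk`, outside columns -/
theorem mem_Sk_out {i A k : ℕ} {T : ℕ → ℕ → Finset ℕ} {r j : ℕ} (h : j < k ∨ A < j) :
    Sk i A (restrictTwo i T) k r j = restrictTwo i T r j := by
  unfold Sk
  rw [if_pos h]

theorem mem_Sk_k {i A k : ℕ} {T : ℕ → ℕ → Finset ℕ} {r x : ℕ} (hk : k ≤ A) :
    x ∈ Sk i A (restrictTwo i T) k r k ↔ x = i ∧ NN i T r k := by
  unfold Sk
  rw [if_neg (by omega), if_pos rfl, Finset.mem_image, ← restrict_nonempty]
  constructor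
  · rintro ⟨y, hy, rfl⟩
    exact ⟨rfl, y, hy⟩
  · rintro ⟨rfl, y, hy⟩
    exact ⟨y, hy, rfl⟩

theorem mem_Sk_mid {R C i A k : ℕ} {T : ℕ → ℕ → Finset ℕ} (hN : Nice R C T)
    (hI : ResInv i A T k) {r j x : ℕ} (h1 : k < j) (h2 : j ≤ A) :
    x ∈ Sk i A (restrictTwo i T) k r j ↔ NN i T r j ∧
      ((x = i ∧ ∃ r', r ≤ r' ∧ i ∈ T r' (j - 1)) ∨
       (x = i + 1 ∧ ∃ r', r' ≤ r ∧ i + 1 ∈ T r' (j - 1))) := by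
  obtain ⟨rl, hl, -⟩ := hI.link (j - 1) (by omega) (by omega)
  obtain ⟨ra, ha⟩ := hI.mixA (j - 1) (by omega) (by omega)
  obtain ⟨hs, hsm⟩ := sep_spec ⟨rl, hl⟩
  unfold Sk
  rw [if_neg (by omega), if_neg (by omega)]
  simp only [restrict_nonempty]
  set s := sep i (restrictTwo i T) (j - 1) with hsdef
  by_cases hn : NN i T r j
  swap
  · simp [hn]
  have has : ∀ r', i ∈ T r' (j - 1) → r' ≤ s := by
    intro r' h
    by_contra hc
    have := hN.mono (show s ≤ r' by omega) (le_refl (j - 1)) (by omega) hs h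
    omega
  rw [if_pos hn]
  simp only [hn, true_and]
  rcases lt_trichotomy r s with h | h | h
  · rw [if_pos h, Finset.mem_singleton]
    constructor
    · rintro rfl
      left
      refine ⟨rfl, ?_⟩
      by_cases hra : r ≤ ra
      · exact ⟨ra, hra, ha⟩
      · obtain ⟨z, hz, hz1, hz2⟩ := hN.mid r (j - 1) (by omega) h.le le_rfl le_rfl
          (by omega) ha hs
        have : z ≠ x + 1 := by
          rintro rfl
          have := hsm r hz
          omega
        obtain rfl : z = x := by omega
        exact ⟨r, le_rfl, hz⟩
    · rintro (⟨h, -⟩ | ⟨-, r', hr', hb⟩)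
      · exact h
      · have := hsm r' hb
        omega
  · rw [if_neg (by omega), if_pos h, mem_restrict]
    subst h
    constructor
    · rintro ⟨hx, rfl | rfl⟩
      · exact Or.inl ⟨rfl, _, le_rfl, hx⟩
      · exact Or.inr ⟨rfl, _, le_rfl, hx⟩
    · rintro (⟨rfl, r', hr', hb⟩ | ⟨rfl, r', hr', hb⟩)
      · have := has r' hb
        obtain rfl : r' = s := by omega
        exact ⟨hb, Or.inl rfl⟩
      · exact ⟨hs, Or.inr rfl⟩
  · rw [if_neg (by omega), if_neg (by omega), Finset.mem_singleton]
    constructor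
    · rintro rfl
      exact Or.inr ⟨rfl, s, h.le, hs⟩
    · rintro (⟨h, r', hr', hb⟩ | ⟨h, -⟩)
      · have := has r' hb
        omega
      · exact h

theorem Sk_sub {R C i A k : ℕ} {T : ℕ → ℕ → Finset ℕ} (hN : Nice R C T)
    (hI : ResInv i A T k) {r j x : ℕ} (h : x ∈ Sk i A (restrictTwo i T) k r j) :
    (x = i ∨ x = i + 1) ∧ NN i T r j := by
  by_cases h1 : j < k ∨ A < j
  · rw [mem_Sk_out h1, mem_restrict] at h
    refine ⟨h.2, ?_⟩
    rcases h with ⟨h, rfl | rfl⟩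
    · exact Or.inl h
    · exact Or.inr h
  by_cases h2 : j = k
  · subst h2
    rw [mem_Sk_k hI.le] at h
    exact ⟨Or.inl h.1, h.2⟩
  · rw [mem_Sk_mid hN hI (by omega) (by omega)] at h
    exact ⟨h.2.imp And.left And.left, h.1⟩

theorem Sk_ne {R C i A k : ℕ} {T : ℕ → ℕ → Finset ℕ} (hN : Nice R C T)
    (hI : ResInv i A T k) {r j : ℕ} (h : NN i T r j) :
    ∃ x, x ∈ Sk i A (restrictTwo i T) k r j := by
  by_cases h1 : j < k ∨ A < j
  · rw [mem_Sk_out h1]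
    exact (restrict_nonempty i T r j).2 h
  by_cases h2 : j = k
  · subst h2
    exact ⟨i, by rw [mem_Sk_k hI.le]; exact ⟨rfl, h⟩⟩
  · obtain ⟨rl, hl, -⟩ := hI.link (j - 1) (by omega) (by omega)
    obtain ⟨ra, ha⟩ := hI.mixA (j - 1) (by omega) (by omega)
    by_cases hra : r ≤ ra
    · exact ⟨i, by rw [mem_Sk_mid hN hI (by omega) (by omega)]
                   exact ⟨h, Or.inl ⟨rfl, ra, hra, ha⟩⟩⟩
    by_cases hrl : rl ≤ r
    · exact ⟨i + 1, by rw [mem_Sk_mid hN hI (by omega) (by omega)]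
                       exact ⟨h, Or.inr ⟨rfl, rl, hrl, hl⟩⟩⟩
    · obtain ⟨z, hz, hz1, hz2⟩ := hN.mid r (j - 1) (by omega) (show r ≤ rl by omega) le_rfl le_rfl
          (by omega) ha hl
      rcases (show z = i ∨ z = i + 1 by omega) with rfl | rfl
      · exact ⟨z, by rw [mem_Sk_mid hN hI (by omega) (by omega)]
                     exact ⟨h, Or.inl ⟨rfl, r, le_rfl, hz⟩⟩⟩
      · exact ⟨i + 1, by rw [mem_Sk_mid hN hI (by omega) (by omega)]
                         exact ⟨h, Or.inr ⟨rfl, r, le_rfl, hz⟩⟩⟩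

theorem fsuffix_const {R C i A k : ℕ} {T : ℕ → ℕ → Finset ℕ} (hN : Nice R C T)
    (hI : ResInv i A T k) : ∀ d, k ≤ A - d → fsuffix i T A ≤ fsuffix i T (A - d) := by
  intro d
  induction d with
  | zero => intro _; exact le_rfl
  | succ d ih =>
    intro hd
    by_cases hA : A ≤ d
    · rw [show A - (d + 1) = A - d by omega]
      exact ih (by omega)
    have h1 := ih (by omega)
    obtain ⟨rl, hl, -⟩ := hI.link (A - (d + 1)) hd (by omega)
    have h2 := (fsuffix_succ hN i (A - (d + 1))).2.2 (fun h => h.2 _ hl)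
    rw [show A - (d + 1) + 1 = A - d by omega] at h2
    exact h1.trans h2

theorem step_Sk {R C i A k k' : ℕ} {T : ℕ → ℕ → Finset ℕ} (hN : Nice R C T)
    (hA : LeftmostUnpairedMinus i T A) (hI : ResInv i A T k)
    (hd : Descent i (Sk i A (restrictTwo i T) k) k') :
    k = k' + 1 ∧ ResInv i A T k' ∧
    resFun i (Sk i A (restrictTwo i T) k) k' = Sk i A (restrictTwo i T) k' := by
  obtain ⟨hPB, hmax, hlt⟩ := hA
  rw [colPureB_iff] at hPB
  obtain ⟨r, hb, ha⟩ := hd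
  have hkA := hI.le
  have hkk : k = k' + 1 := by
    by_contra hne
    have hnd : ∀ r, i + 1 ∈ T r k' → i ∈ T r (k' + 1) → False := by
      intro r h1 h2
      have := hN.mono (le_refl r) (Nat.le_succ k') (by omega) h1 h2
      omega
    by_cases c1 : k' + 1 < k ∨ A < k'
    · rw [mem_Sk_out (by omega), mem_restrict] at hb ha
      exact hnd r hb.1 ha.1
    by_cases c2 : k' = k
    · subst c2
      rw [mem_Sk_k hI.le] at hb
      omega
    rw [mem_Sk_mid hN hI (by omega) (by omega)] at hb
    by_cases c3 : k' = A
    · subst c3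
      rw [mem_Sk_out (by omega), mem_restrict] at ha
      rcases hb.1 with h | h
      · exact hPB.2 _ h
      · exact hnd r h ha.1
    rw [mem_Sk_mid hN hI (by omega) (by omega)] at ha
    obtain ⟨-, (⟨h, -⟩ | ⟨-, r1, hr1, hb1⟩)⟩ := hb
    · omega
    obtain ⟨-, (⟨-, r2, hr2, hb2⟩ | ⟨h, -⟩)⟩ := ha
    · rw [Nat.add_sub_cancel] at hb2
      have := hN.mono (show r1 ≤ r2 by omega) (Nat.sub_le k' 1) (by omega) hb1 hb2
      omega
    · omega
  subst hkk
  rw [mem_Sk_out (by omega), mem_restrict] at hb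
  rw [mem_Sk_k hkA] at ha
  have hmixed : ∃ r, i ∈ T r k' := by
    by_contra hc
    push Not at hc
    have h1 := (fsuffix_succ hN i k').1 ⟨⟨r, hb.1⟩, hc⟩
    have h2 := fsuffix_const hN hI (A - (k' + 1)) (by omega)
    rw [show A - (A - (k' + 1)) = k' + 1 by omega] at h2
    have := hmax k'
    omega
  refine ⟨rfl, ⟨by omega, ?_, ?_⟩, ?_⟩
  · intro j hj hjA
    by_cases h : j = k'
    · subst h; exact hmixed
    · exact hI.mixA j (by omega) hjA
  · intro j hj hjA
    by_cases h : j = k'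
    · subst h; exact ⟨r, hb.1, ha.2⟩
    · exact hI.link j (by omega) hjA
  · have hcm : ColMixed i (Sk i A (restrictTwo i T) (k' + 1)) k' := by
      obtain ⟨ra, hra⟩ := hmixed
      constructor
      · exact ⟨ra, by rw [mem_Sk_out (by omega), mem_restrict]; exact ⟨hra, Or.inl rfl⟩⟩
      · exact ⟨r, by rw [mem_Sk_out (by omega), mem_restrict]; exact hb⟩
    have hcp : ColPureA i (Sk i A (restrictTwo i T) (k' + 1)) (k' + 1) := by
      constructor
      · exact ⟨r, by rw [mem_Sk_k hkA]; exact ha⟩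
      · rintro ⟨r', hr'⟩
        rw [mem_Sk_k hkA] at hr'
        omega
    have hsep : sep i (Sk i A (restrictTwo i T) (k' + 1)) k' = sep i (restrictTwo i T) k' := by
      unfold sep
      congr 1
      ext r'
      rw [Set.mem_ofPred_eq, Set.mem_ofPred_eq, mem_Sk_out (by omega)]
    funext r' j
    unfold resFun
    rw [if_pos ⟨hcm, hcp⟩, hsep]
    by_cases c1 : j = k'
    · subst c1
      rw [if_pos rfl, mem_Sk_out (by omega)]
      unfold Sk
      rw [if_neg (by omega), if_pos rfl]
    rw [if_neg c1]
    by_cases c2 : j = k' + 1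
    · subst c2
      rw [if_pos rfl, mem_Sk_out (j := k') (by omega)]
      have hne : (Sk i A (restrictTwo i T) (k' + 1) r' (k' + 1)).Nonempty ↔
          (restrictTwo i T r' (k' + 1)).Nonempty := by
        rw [restrict_nonempty]
        constructor
        · rintro ⟨x, hx⟩
          exact (Sk_sub hN hI hx).2
        · intro h
          exact Sk_ne hN hI h
      rw [if_congr hne rfl rfl]
      conv_rhs =>
        unfold Sk
        rw [if_neg (show ¬ (k' + 1 < k' ∨ A < k' + 1) by omega), if_neg c1, Nat.add_sub_cancel]
    rw [if_neg c2]
    unfold Sk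
    by_cases c3 : j < k' ∨ A < j
    · rw [if_pos (by omega), if_pos c3]
    · rw [if_neg (by omega), if_neg c2, if_neg c3, if_neg c1]

theorem inv_A {i A : ℕ} {T : ℕ → ℕ → Finset ℕ} : ResInv i A T A :=
  ⟨le_rfl, fun j h1 h2 => by omega, fun j h1 h2 => by omega⟩

theorem reach_Sk {R C i A : ℕ} {T : ℕ → ℕ → Finset ℕ} (hN : Nice R C T)
    (hA : LeftmostUnpairedMinus i T A) {S' : ℕ → ℕ → Finset ℕ}
    (h : Relation.ReflTransGen (ResStep i) (raiseCol i A (restrictTwo i T)) S') :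
    ∃ k, ResInv i A T k ∧ S' = Sk i A (restrictTwo i T) k := by
  induction h with
  | refl => exact ⟨A, inv_A, raise_eq⟩
  | tail _ hstep ih =>
    obtain ⟨k, hI, rfl⟩ := ih
    obtain ⟨k', hd, rfl⟩ := hstep
    obtain ⟨-, hI', he⟩ := step_Sk hN hA hI hd
    exact ⟨k', hI', he⟩

theorem terminates {R C i A : ℕ} {T : ℕ → ℕ → Finset ℕ} (hN : Nice R C T)
    (hA : LeftmostUnpairedMinus i T A) : ∀ k, ResInv i A T k →
    ∃ S', Relation.ReflTransGen (ResStep i) (Sk i A (restrictTwo i T) k) S' ∧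
      ∀ k, ¬ Descent i S' k := by
  intro k
  induction k with
  | zero =>
    intro hI
    refine ⟨_, Relation.ReflTransGen.refl, ?_⟩
    intro k' hd
    have := (step_Sk hN hA hI hd).1
    omega
  | succ k ih =>
    intro hI
    by_cases hex : ∃ k', Descent i (Sk i A (restrictTwo i T) (k + 1)) k'
    · obtain ⟨k', hd⟩ := hex
      obtain ⟨h1, hI', he⟩ := step_Sk hN hA hI hd
      obtain rfl : k = k' := by omega
      obtain ⟨S', h2, h3⟩ := ih hI'
      refine ⟨S', Relation.ReflTransGen.head ⟨k, hd, he.symm⟩ h2, h3⟩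
    · push Not at hex
      exact ⟨_, Relation.ReflTransGen.refl, hex⟩

theorem erel_exists {R C i A : ℕ} {T : ℕ → ℕ → Finset ℕ} (hN : Nice R C T)
    (hA : LeftmostUnpairedMinus i T A) : ∃ T', ERel i T T' := by
  obtain ⟨S', h1, h2⟩ := terminates hN hA A inv_A
  exact ⟨_, A, S', hA, raise_eq ▸ h1, h2, rfl⟩

theorem mem_merge {i : ℕ} {T S : ℕ → ℕ → Finset ℕ} {r j x : ℕ} :
    x ∈ mergeTwo i T S r j ↔ (x ∈ T r j ∧ x ≠ i ∧ x ≠ i + 1) ∨ x ∈ S r j := by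
  simp [mergeTwo, eraseTwo]

theorem merge_svrpp {R C i A k : ℕ} {lam mu : ℕ → ℕ} {T : ℕ → ℕ → Finset ℕ} (hi : 1 ≤ i)
    (hN : Nice R C T) (hT : IsSVRPP lam mu T) (hI : ResInv i A T k)
    (hnd : ∀ k', ¬ Descent i (Sk i A (restrictTwo i T) k) k') :
    IsSVRPP lam mu (mergeTwo i T (Sk i A (restrictTwo i T) k)) := by
  have cmp : ∀ {r j r' j' x y}, r ≤ r' → j ≤ j' → (r < r' ∨ j < j') →
      ¬ (i + 1 ∈ Sk i A (restrictTwo i T) k r j ∧ i ∈ Sk i A (restrictTwo i T) k r' j') →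
      x ∈ mergeTwo i T (Sk i A (restrictTwo i T) k) r j →
      y ∈ mergeTwo i T (Sk i A (restrictTwo i T) k) r' j' → x ≤ y := by
    intro r j r' j' x y h1 h2 h3 h4 hx hy
    rw [mem_merge] at hx hy
    rcases hx with hx | hx <;> rcases hy with hy | hy
    · exact hN.mono h1 h2 h3 hx.1 hy.1
    · obtain ⟨h5, h6⟩ := Sk_sub hN hI hy
      rcases h6 with h6 | h6
      · have := hN.mono h1 h2 h3 hx.1 h6; omega
      · have := hN.mono h1 h2 h3 hx.1 h6; omega
    · obtain ⟨h5, h6⟩ := Sk_sub hN hI hx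
      rcases h6 with h6 | h6
      · have := hN.mono h1 h2 h3 h6 hy.1; omega
      · have := hN.mono h1 h2 h3 h6 hy.1; omega
    · obtain ⟨h5, -⟩ := Sk_sub hN hI hx
      obtain ⟨h6, -⟩ := Sk_sub hN hI hy
      rcases h5 with rfl | rfl
      · omega
      · rcases h6 with rfl | rfl
        · exact absurd ⟨hx, hy⟩ h4
        · omega
  refine ⟨?_, ?_, ?_, ?_, ?_⟩
  · intro r j h
    have h0 := hT.1 r j h
    apply Finset.eq_empty_of_forall_notMem
    intro x hx
    rw [mem_merge] at hx
    rcases hx with hx | hx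
    · rw [h0] at hx; simp at hx
    · have := (Sk_sub hN hI hx).2
      unfold NN at this
      rw [h0] at this
      simp at this
  · intro r j h
    obtain ⟨y, hy⟩ := hT.2.1 r j h
    by_cases hyi : y = i ∨ y = i + 1
    · have : NN i T r j := by
        rcases hyi with rfl | rfl
        · exact Or.inl hy
        · exact Or.inr hy
      obtain ⟨x, hx⟩ := Sk_ne hN hI this
      exact ⟨x, mem_merge.2 (Or.inr hx)⟩
    · exact ⟨y, mem_merge.2 (Or.inl ⟨hy, by omega, by omega⟩)⟩
  · intro r j x hx
    rw [mem_merge] at hx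
    rcases hx with hx | hx
    · exact hT.2.2.1 r j x hx.1
    · have := (Sk_sub hN hI hx).1
      omega
  · intro r j _ _ x hx y hy
    refine cmp le_rfl (Nat.le_succ j) (by omega) ?_ hx hy
    exact fun h => hnd j ⟨r, h⟩
  · intro r j _ _ x hx y hy
    refine cmp (Nat.le_succ r) le_rfl (by omega) ?_ hx hy
    rintro ⟨ha, hb⟩
    by_cases c1 : j < k ∨ A < j
    · rw [mem_Sk_out c1, mem_restrict] at ha hb
      have := hN.mono (Nat.le_succ r) (le_refl j) (by omega) ha.1 hb.1
      omega
    by_cases c2 : j = k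
    · subst c2
      rw [mem_Sk_k hI.le] at ha
      omega
    rw [mem_Sk_mid hN hI (by omega) (by omega)] at ha hb
    obtain ⟨-, (⟨h, -⟩ | ⟨-, r1, hr1, hb1⟩)⟩ := ha
    · omega
    obtain ⟨-, (⟨-, r2, hr2, hb2⟩ | ⟨h, -⟩)⟩ := hb
    · have := hN.mono (show r1 ≤ r2 by omega) (le_refl (j - 1)) (by omega) hb1 hb2
      omega
    · omega

/-- top of the two-letter part of a column -/
def TN (i : ℕ) (T : ℕ → ℕ → Finset ℕ) (r j : ℕ) : Prop :=
  NN i T r j ∧ ¬ (r ≠ 0 ∧ NN i T (r - 1) j)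

theorem NN_mid {R C i : ℕ} {T : ℕ → ℕ → Finset ℕ} (hN : Nice R C T)
    {r r' j j' : ℕ} (r1 j1 : ℕ) (h1 : r ≤ r1) (h2 : r1 ≤ r') (h3 : j ≤ j1) (h4 : j1 ≤ j')
    (h5 : r < r' ∨ j < j') (ha : NN i T r j) (hb : NN i T r' j') : NN i T r1 j1 := by
  have : ∃ x, x ∈ T r j ∧ (x = i ∨ x = i + 1) := by
    rcases ha with h | h
    · exact ⟨_, h, Or.inl rfl⟩
    · exact ⟨_, h, Or.inr rfl⟩
  obtain ⟨x, hx, hx'⟩ := this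
  have : ∃ y, y ∈ T r' j' ∧ (y = i ∨ y = i + 1) := by
    rcases hb with h | h
    · exact ⟨_, h, Or.inl rfl⟩
    · exact ⟨_, h, Or.inr rfl⟩
  obtain ⟨y, hy, hy'⟩ := this
  obtain ⟨z, hz, hz1, hz2⟩ := hN.mid r1 j1 h1 h2 h3 h4 h5 hx hy
  rcases (show z = i ∨ z = i + 1 by omega) with rfl | rfl
  · exact Or.inl hz
  · exact Or.inr hz

theorem TN_le {R C i : ℕ} {T : ℕ → ℕ → Finset ℕ} (hN : Nice R C T)
    {r r' j : ℕ} (h : TN i T r j) (h' : NN i T r' j) : r ≤ r' := by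
  by_contra hc
  exact h.2 ⟨by omega, NN_mid hN (r - 1) j (show r' ≤ r - 1 by omega) (show r - 1 ≤ r by omega)
    le_rfl le_rfl (by omega) h' h.1⟩

theorem TN_iff_mixed {R C i : ℕ} {T : ℕ → ℕ → Finset ℕ} (hN : Nice R C T) {r j : ℕ}
    (hm : ∃ r, i ∈ T r j) : TN i T r j ↔ TopE T i r j := by
  constructor
  · intro h
    obtain ⟨ra, hra⟩ := hm
    have h1 := TN_le hN h (Or.inl hra)
    refine ⟨?_, fun h' => h.2 ⟨h'.1, Or.inl h'.2⟩⟩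
    rcases h.1 with h2 | h2
    · exact h2
    · by_cases he : r = ra
      · subst he; exact hra
      · have := hN.mono h1 (le_refl j) (by omega) h2 hra
        omega
  · intro h
    refine ⟨Or.inl h.1, ?_⟩
    rintro ⟨h0, h1 | h1⟩
    · exact h.2 ⟨h0, h1⟩
    · have := hN.mono (show r - 1 ≤ r by omega) (le_refl j) (by omega) h1 h.1
      omega

theorem TN_iff_pure {i : ℕ} {T : ℕ → ℕ → Finset ℕ} {r j : ℕ}
    (hm : PB i T j) : TN i T r j ↔ TopE T (i + 1) r j := by
  have : ∀ r, NN i T r j ↔ i + 1 ∈ T r j := fun r =>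
    ⟨fun h => h.resolve_left (hm.2 r), Or.inr⟩
  unfold TN TopE
  rw [this, this]

section
variable {R C i A k : ℕ} {T : ℕ → ℕ → Finset ℕ}

theorem mg_other {S : ℕ → ℕ → Finset ℕ} (hS : ∀ r j x, x ∈ S r j → x = i ∨ x = i + 1)
    {x r j : ℕ} (h1 : x ≠ i) (h2 : x ≠ i + 1) : x ∈ mergeTwo i T S r j ↔ x ∈ T r j := by
  rw [mem_merge]
  constructor
  · rintro (h | h)
    · exact h.1
    · have := hS r j x h
      omega
  · exact fun h => Or.inl ⟨h, h1, h2⟩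

theorem mg_in {S : ℕ → ℕ → Finset ℕ} {x r j : ℕ} (h : x = i ∨ x = i + 1) :
    x ∈ mergeTwo i T S r j ↔ x ∈ S r j := by
  rw [mem_merge]
  constructor
  · rintro (h' | h')
    · omega
    · exact h'
  · exact Or.inr

theorem top_i_in (hN : Nice R C T) (hI : ResInv i A T k) {r j : ℕ} (h1 : k ≤ j) (h2 : j ≤ A) :
    TopE (mergeTwo i T (Sk i A (restrictTwo i T) k)) i r j ↔ TN i T r j := by
  unfold TopE
  rw [mg_in (Or.inl rfl), mg_in (Or.inl rfl)]
  by_cases c2 : j = k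
  · subst c2
    rw [mem_Sk_k hI.le, mem_Sk_k hI.le]
    simp [TN]
  rw [mem_Sk_mid hN hI (by omega) (by omega), mem_Sk_mid hN hI (by omega) (by omega)]
  constructor
  · rintro ⟨⟨h3, h4⟩, h5⟩
    refine ⟨h3, ?_⟩
    rintro ⟨h6, h7⟩
    refine h5 ⟨h6, h7, ?_⟩
    rcases h4 with ⟨-, r', hr', h8⟩ | ⟨h8, -⟩
    · exact Or.inl ⟨rfl, r', by omega, h8⟩
    · omega
  · intro h
    refine ⟨⟨h.1, Or.inl ⟨rfl, ?_⟩⟩, fun h' => h.2 ⟨h'.1, h'.2.1⟩⟩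
    obtain ⟨rl, hl, hl'⟩ := hI.link (j - 1) (by omega) (by omega)
    obtain ⟨ra, ha⟩ := hI.mixA (j - 1) (by omega) (by omega)
    rw [show j - 1 + 1 = j by omega] at hl'
    have hrl := TN_le hN h hl'
    by_cases hra : r ≤ ra
    · exact ⟨ra, hra, ha⟩
    · exact absurd ⟨by omega, NN_mid hN (r - 1) j (show ra ≤ r - 1 by omega)
        (show r - 1 ≤ rl by omega) (Nat.sub_le j 1) le_rfl (by omega) (Or.inl ha) hl'⟩ h.2

theorem link_top (hN : Nice R C T) (hI : ResInv i A T k) {r j : ℕ} (h1 : k ≤ j) (h2 : j < A)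
    (h : TopE T (i + 1) r j) : NN i T r (j + 1) := by
  obtain ⟨rl, hl, hl'⟩ := hI.link j h1 h2
  exact NN_mid hN r (j + 1) le_rfl (TopE.le hN h hl) (by omega) le_rfl (by omega) (Or.inr h.1) hl'

theorem top_i1_mid (hN : Nice R C T) (hI : ResInv i A T k) {r j : ℕ} (h1 : k < j) (h2 : j ≤ A) :
    TopE (mergeTwo i T (Sk i A (restrictTwo i T) k)) (i + 1) r j ↔ TopE T (i + 1) r (j - 1) := by
  have hm : ∀ r, i + 1 ∈ mergeTwo i T (Sk i A (restrictTwo i T) k) r j ↔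
      NN i T r j ∧ ∃ r', r' ≤ r ∧ i + 1 ∈ T r' (j - 1) := by
    intro r
    rw [mg_in (Or.inr rfl), mem_Sk_mid hN hI (by omega) (by omega)]
    simp
  unfold TopE
  rw [hm, hm]
  constructor
  · rintro ⟨⟨h3, r', hr', h4⟩, h5⟩
    obtain ⟨s, hs⟩ := exists_top h4
    have hsr := TopE.le hN hs h4
    have hns := link_top hN hI (by omega) (by omega) hs
    rw [show j - 1 + 1 = j by omega] at hns
    by_cases he : s = r
    · subst he; exact hs
    · refine absurd ⟨by omega, ?_, s, by omega, hs.1⟩ h5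
      exact NN_mid hN (r - 1) j (show s ≤ r - 1 by omega) (show r - 1 ≤ r by omega) le_rfl le_rfl
        (by omega) hns h3
  · intro h
    have hns := link_top hN hI (by omega) (by omega) h
    rw [show j - 1 + 1 = j by omega] at hns
    refine ⟨⟨hns, r, le_rfl, h.1⟩, ?_⟩
    rintro ⟨h0, -, r', hr', hb⟩
    have := TopE.le hN h hb
    omega

theorem low_i {S : ℕ → ℕ → Finset ℕ} (hS : ∀ r j x, x ∈ S r j → x = i ∨ x = i + 1) {r j : ℕ} :
    Low (mergeTwo i T S) i r j ↔ Low T i r j := by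
  constructor
  · rintro ⟨y, hy, h⟩
    exact ⟨y, (mg_other hS (by omega) (by omega)).1 hy, h⟩
  · rintro ⟨y, hy, h⟩
    exact ⟨y, (mg_other hS (by omega) (by omega)).2 hy, h⟩

theorem low_pure {r j : ℕ} (hm : PB i T j) : Low T i r j ↔ Low T (i + 1) r j := by
  constructor
  · rintro ⟨y, hy, h⟩
    exact ⟨y, hy, by omega⟩
  · rintro ⟨y, hy, h⟩
    have : y ≠ i := fun h => hm.2 r (h ▸ hy)
    exact ⟨y, hy, by omega⟩

theorem low_i1_mid (hN : Nice R C T) (hI : ResInv i A T k) {r j : ℕ} (h1 : k < j) (h2 : j ≤ A)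
    (ht : TopE T (i + 1) r (j - 1)) :
    Low (mergeTwo i T (Sk i A (restrictTwo i T) k)) (i + 1) r j ↔ Low T (i + 1) r (j - 1) := by
  have hns := link_top hN hI (by omega) (by omega) ht
  rw [show j - 1 + 1 = j by omega] at hns
  constructor
  · rintro ⟨y, hy, hlt⟩
    rw [mem_merge] at hy
    rcases hy with hy | hy
    · have := hN.mono (le_refl r) (Nat.sub_le j 1) (by omega) ht.1 hy.1
      omega
    · rw [mem_Sk_mid hN hI h1 h2] at hy
      obtain ⟨-, ⟨rfl, r', hr', h⟩ | ⟨h, -⟩⟩ := hy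
      · by_cases he : r = r'
        · subst he; exact ⟨_, h, hlt⟩
        · have := hN.mono hr' (le_refl (j - 1)) (by omega) ht.1 h
          omega
      · omega
  · rintro ⟨y, hy, hlt⟩
    refine ⟨i, ?_, by omega⟩
    rw [mg_in (Or.inl rfl), mem_Sk_mid hN hI h1 h2]
    refine ⟨hns, Or.inl ⟨rfl, ?_⟩⟩
    obtain ⟨ra, ha⟩ := hI.mixA (j - 1) (by omega) (by omega)
    by_cases hra : r ≤ ra
    · exact ⟨ra, hra, ha⟩
    · have := hN.mono (show ra ≤ r by omega) (le_refl (j - 1)) (by omega) ha hy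
      obtain rfl : y = i := by omega
      exact ⟨r, le_rfl, hy⟩

theorem mg_out {r j : ℕ} (h : j < k ∨ A < j) :
    mergeTwo i T (Sk i A (restrictTwo i T) k) r j = T r j := by
  ext x
  rw [mem_merge, mem_Sk_out h, mem_restrict]
  constructor
  · rintro (h | h)
    · exact h.1
    · exact h.1
  · intro hx
    by_cases hxi : x = i ∨ x = i + 1
    · exact Or.inr ⟨hx, hxi⟩
    · exact Or.inl ⟨hx, by omega, by omega⟩

theorem top_out {x r j : ℕ} (h : j < k ∨ A < j) :
    TopE (mergeTwo i T (Sk i A (restrictTwo i T) k)) x r j ↔ TopE T x r j := by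
  unfold TopE
  rw [mg_out h, mg_out h]

theorem low_out {x r j : ℕ} (h : j < k ∨ A < j) :
    Low (mergeTwo i T (Sk i A (restrictTwo i T) k)) x r j ↔ Low T x r j := by
  unfold Low
  rw [mg_out h]

theorem top_other (hN : Nice R C T) (hI : ResInv i A T k) {x r j : ℕ}
    (h1 : x ≠ i) (h2 : x ≠ i + 1) :
    TopE (mergeTwo i T (Sk i A (restrictTwo i T) k)) x r j ↔ TopE T x r j := by
  have hS : ∀ r j x, x ∈ Sk i A (restrictTwo i T) k r j → x = i ∨ x = i + 1 :=
    fun r j x h => (Sk_sub hN hI h).1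
  unfold TopE
  rw [mg_other hS h1 h2, mg_other hS h1 h2]

theorem low_other (hN : Nice R C T) (hI : ResInv i A T k) {x r j : ℕ}
    (h1 : x ≠ i) (h2 : x ≠ i + 1) :
    Low (mergeTwo i T (Sk i A (restrictTwo i T) k)) x r j ↔ Low T x r j := by
  have hS : ∀ r j x, x ∈ Sk i A (restrictTwo i T) k r j → x = i ∨ x = i + 1 :=
    fun r j x h => (Sk_sub hN hI h).1
  constructor
  · rintro ⟨y, hy, h⟩
    by_cases hyi : y = i ∨ y = i + 1
    · rw [mg_in hyi] at hy
      rcases (Sk_sub hN hI hy).2 with h' | h'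
      · exact ⟨_, h', by omega⟩
      · exact ⟨_, h', by omega⟩
    · exact ⟨y, (mg_other hS (by omega) (by omega)).1 hy, h⟩
  · rintro ⟨y, hy, h⟩
    by_cases hyi : y = i ∨ y = i + 1
    · have : NN i T r j := by
        rcases hyi with rfl | rfl
        · exact Or.inl hy
        · exact Or.inr hy
      obtain ⟨z, hz⟩ := Sk_ne hN hI this
      have := hS _ _ _ hz
      exact ⟨z, mem_merge.2 (Or.inr hz), by omega⟩
    · exact ⟨y, (mg_other hS (by omega) (by omega)).2 hy, h⟩

end

def shiftE (i A k : ℕ) (e : ℕ × Bool × ℕ × ℕ) : ℕ × Bool × ℕ × ℕ :=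
  if e.2.2.1 = i + 1 then
    (if e.2.2.2 = A then (e.1, e.2.1, i, A)
     else if k ≤ e.2.2.2 ∧ e.2.2.2 < A then (e.1, e.2.1, e.2.2.1, e.2.2.2 + 1)
     else e)
  else e

theorem shift_mem {R C i A k : ℕ} {T : ℕ → ℕ → Finset ℕ} (hN : Nice R C T) (hA : PB i T A)
    (hI : ResInv i A T k) (hN' : Nice R C (mergeTwo i T (Sk i A (restrictTwo i T) k)))
    (e : ℕ × Bool × ℕ × ℕ) (he : e ∈ tagWord R C T) :
    shiftE i A k e ∈ tagWord R C (mergeTwo i T (Sk i A (restrictTwo i T) k)) := by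
  have hS : ∀ r j x, x ∈ Sk i A (restrictTwo i T) k r j → x = i ∨ x = i + 1 :=
    fun r j x h => (Sk_sub hN hI h).1
  have hkA := hI.le
  rw [mem_tagWord hN'] 
  rw [mem_tagWord hN] at he
  obtain ⟨r, st, x, j⟩ := e
  simp only at he
  unfold shiftE
  simp only
  by_cases c1 : x = i + 1
  · subst c1
    rw [if_pos rfl]
    by_cases c2 : j = A
    · subst c2
      rw [if_pos rfl]
      simp only
      rw [top_i_in hN hI hkA le_rfl, TN_iff_pure hA, low_i hS, low_pure hA]
      exact he
    rw [if_neg c2]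
    by_cases c3 : k ≤ j ∧ j < A
    · rw [if_pos c3]
      simp only
      rw [top_i1_mid hN hI (by omega) (by omega)]
      rw [low_i1_mid hN hI (by omega) (by omega) (by rw [Nat.add_sub_cancel]; exact he.1)]
      rw [Nat.add_sub_cancel]
      exact he
    · rw [if_neg c3]
      simp only
      rw [top_out (by omega), low_out (by omega)]
      exact he
  · rw [if_neg c1]
    simp only
    by_cases c2 : x = i
    · subst c2
      rw [low_i hS]
      refine ⟨?_, he.2⟩
      by_cases c3 : j < k ∨ A < j
      · rw [top_out c3]; exact he.1
      · rw [top_i_in hN hI (by omega) (by omega), TN_iff_mixed hN ⟨r, he.1.1⟩]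
        exact he.1
    · rw [top_other hN hI c2 c1, low_other hN hI c2 c1]
      exact he

theorem shift_surj {R C i A k : ℕ} {T : ℕ → ℕ → Finset ℕ} (hN : Nice R C T) (hA : PB i T A)
    (hI : ResInv i A T k) (hN' : Nice R C (mergeTwo i T (Sk i A (restrictTwo i T) k)))
    (e : ℕ × Bool × ℕ × ℕ)
    (he : e ∈ tagWord R C (mergeTwo i T (Sk i A (restrictTwo i T) k))) :
    ∃ f ∈ tagWord R C T, shiftE i A k f = e := by
  have hS : ∀ r j x, x ∈ Sk i A (restrictTwo i T) k r j → x = i ∨ x = i + 1 :=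
    fun r j x h => (Sk_sub hN hI h).1
  have hkA := hI.le
  rw [mem_tagWord hN'] at he
  obtain ⟨r, st, x, j⟩ := e
  simp only at he
  by_cases c1 : x = i + 1
  · subst c1
    by_cases c2 : j < k ∨ A < j
    · rw [top_out c2, low_out c2] at he
      refine ⟨(r, st, i + 1, j), (mem_tagWord hN _).2 he, ?_⟩
      unfold shiftE
      simp only
      rw [if_pos trivial, if_neg (by omega), if_neg (by omega)]
    by_cases c3 : j = k
    · subst c3
      have := he.1.1
      rw [mg_in (Or.inr rfl), mem_Sk_k hkA] at this
      omega
    · have ht := he.1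
      rw [top_i1_mid hN hI (by omega) (by omega)] at ht
      rw [low_i1_mid hN hI (by omega) (by omega) ht] at he
      refine ⟨(r, st, i + 1, j - 1), (mem_tagWord hN _).2 ⟨ht, he.2⟩, ?_⟩
      unfold shiftE
      simp only
      rw [if_pos trivial, if_neg (by omega), if_pos (by omega), show j - 1 + 1 = j by omega]
  by_cases c2 : x = i
  · subst c2
    rw [low_i hS] at he
    by_cases c3 : j = A
    · subst c3
      rw [top_i_in hN hI hkA le_rfl, TN_iff_pure hA, low_pure hA] at he
      refine ⟨(r, st, x + 1, j), (mem_tagWord hN _).2 he, ?_⟩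
      unfold shiftE
      simp only
      rw [if_pos trivial, if_pos trivial]
    · refine ⟨(r, st, x, j), (mem_tagWord hN _).2 ⟨?_, he.2⟩, ?_⟩
      · by_cases c4 : j < k ∨ A < j
        · exact (top_out c4).1 he.1
        · have h := he.1
          rw [top_i_in hN hI (by omega) (by omega),
            TN_iff_mixed hN (hI.mixA j (by omega) (by omega))] at h
          exact h
      · unfold shiftE
        simp only
        rw [if_neg c1]
  · rw [top_other hN hI c2 c1, low_other hN hI c2 c1] at he
    refine ⟨(r, st, x, j), (mem_tagWord hN _).2 he, ?_⟩
    unfold shiftE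
    simp only
    rw [if_neg c1]

theorem shift_inj {R C i A k : ℕ} {T : ℕ → ℕ → Finset ℕ} (hN : Nice R C T) (hA : PB i T A)
    (hI : ResInv i A T k)
    (e : ℕ × Bool × ℕ × ℕ) (he : e ∈ tagWord R C T)
    (f : ℕ × Bool × ℕ × ℕ) (hf : f ∈ tagWord R C T)
    (h : shiftE i A k e = shiftE i A k f) : e = f := by
  rw [mem_tagWord hN] at he hf
  obtain ⟨r, st, x, j⟩ := e
  obtain ⟨r', st', x', j'⟩ := f
  have g1 : x = i → j ≠ A := by
    rintro rfl rfl
    exact hA.2 _ he.1.1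
  have g2 : x' = i → j' ≠ A := by
    rintro rfl rfl
    exact hA.2 _ hf.1.1
  have hkA := hI.le
  unfold shiftE at h
  simp only at h
  split_ifs at h <;> simp only [Prod.mk.injEq] at h ⊢ <;> 
    refine ⟨h.1, h.2.1, ?_, ?_⟩ <;> omega

def ValLE (a b : ℕ × Bool × ℕ) : Prop :=
  b.1 < a.1 ∨ (a.1 = b.1 ∧ ((a.2.1 = false ∧ b.2.1 = true) ∨
    (a.2.1 = false ∧ b.2.1 = false ∧ b.2.2 ≤ a.2.2) ∨
    (a.2.1 = true ∧ b.2.1 = true ∧ a.2.2 ≤ b.2.2)))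

theorem ValLE.antisymm {a b : ℕ × Bool × ℕ} (h : ValLE a b) (h' : ValLE b a) : a = b := by
  obtain ⟨r, st, x⟩ := a
  obtain ⟨r', st', x'⟩ := b
  unfold ValLE at *
  cases st <;> cases st' <;> simp at * <;> omega

def forgetC (e : ℕ × Bool × ℕ × ℕ) : ℕ × Bool × ℕ := (e.1, e.2.1, e.2.2.1)

theorem bef_val {R C : ℕ} {T : ℕ → ℕ → Finset ℕ} (hN : Nice R C T)
    {e f : ℕ × Bool × ℕ × ℕ} (he : e ∈ tagWord R C T) (hf : f ∈ tagWord R C T) (h : Bef e f) :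
    ValLE (forgetC e) (forgetC f) := by
  rw [mem_tagWord hN] at he hf
  obtain ⟨r, st, x, j⟩ := e
  obtain ⟨r', st', x', j'⟩ := f
  unfold Bef at h
  unfold ValLE forgetC
  simp only at *
  rcases h with h | ⟨rfl, h | ⟨h1, h2, h3⟩ | ⟨h1, h2, h3⟩⟩
  · exact Or.inl h
  · exact Or.inr ⟨rfl, Or.inl h⟩
  · exact Or.inr ⟨rfl, Or.inr (Or.inl ⟨h1, h2, h3.le⟩)⟩
  · exact Or.inr ⟨rfl, Or.inr (Or.inr ⟨h1, h2,
      hN.mono (le_refl r) h3.le (Or.inr h3) he.1.1 hf.1.1⟩)⟩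

theorem tag_val_pairwise {R C : ℕ} {T : ℕ → ℕ → Finset ℕ} (hN : Nice R C T) :
    ((tagWord R C T).map forgetC).Pairwise ValLE := by
  rw [List.pairwise_map]
  exact (tagWord_pairwise hN).imp_of_mem (fun he hf h => bef_val hN he hf h)

theorem no_left_pivot {R C i A r0 : ℕ} {T : ℕ → ℕ → Finset ℕ} (hN : Nice R C T)
    (hA : LeftmostUnpairedMinus i T A) (h0 : TopE T (i + 1) r0 A) {j : ℕ} (hj : j < A)
    (h : i + 1 ∈ T r0 j) (hl : ¬ Low T (i + 1) r0 j) : False := by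
  obtain ⟨hPB, hmax, hlt⟩ := hA
  rw [colPureB_iff] at hPB
  obtain ⟨z, hz, hz1, hz2⟩ := hN.mid r0 (A - 1) le_rfl le_rfl (show j ≤ A - 1 by omega)
    (show A - 1 ≤ A by omega) (by omega) h h0.1
  obtain rfl : z = i + 1 := by omega
  have hp : PB i T (A - 1) := by
    refine ⟨⟨r0, hz⟩, ?_⟩
    intro t ht
    rcases Nat.lt_or_ge t r0 with hlt' | hge
    · obtain ⟨y, hy, hy1, hy2⟩ := hN.mid t A le_rfl hlt'.le (Nat.sub_le A 1) le_rfl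
        (by omega) ht h0.1
      have : y ≠ i := fun h => hPB.2 t (h ▸ hy)
      obtain rfl : y = i + 1 := by omega
      have := TopE.le hN h0 hy
      omega
    · rcases hge.lt_or_eq with hgt | rfl
      · have := hN.mono hge (le_refl (A - 1)) (by omega) hz ht
        omega
      · by_cases hjj : j = A - 1
        · subst hjj
          exact hl ⟨i, ht, by omega⟩
        · have := hN.mono (le_refl r0) (show j ≤ A - 1 by omega) (by omega) h ht
          omega
  have h1 := (fsuffix_succ hN i (A - 1)).1 hp
  rw [show A - 1 + 1 = A by omega] at h1
  have := hmax (A - 1)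
  omega

theorem forget_shift {i A k : ℕ} {e : ℕ × Bool × ℕ × ℕ}
    (h : ¬ (e.2.2.1 = i + 1 ∧ e.2.2.2 = A)) : forgetC (shiftE i A k e) = forgetC e := by
  unfold shiftE forgetC
  split_ifs <;> simp_all

theorem read_shift {R C i A k r0 : ℕ} {st0 : Bool} {T : ℕ → ℕ → Finset ℕ} (hN : Nice R C T)
    (hA : LeftmostUnpairedMinus i T A) (hI : ResInv i A T k)
    (hN' : Nice R C (mergeTwo i T (Sk i A (restrictTwo i T) k)))
    {U V : List (ℕ × Bool × ℕ × ℕ)}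
    (hUV : tagWord R C T = U ++ (r0, st0, i + 1, A) :: V) :
    readWord R C (mergeTwo i T (Sk i A (restrictTwo i T) k)) =
      U.map (fun e => e.2.2.1) ++ i :: V.map (fun e => e.2.2.1) := by
  have hPB : PB i T A := by
    have := hA.1
    rwa [colPureB_iff] at this
  have hnd := tagWord_nodup hN
  have hpw := tagWord_pairwise hN
  have hperm : List.Perm (tagWord R C (mergeTwo i T (Sk i A (restrictTwo i T) k)))
      ((tagWord R C T).map (shiftE i A k)) := by
    rw [List.perm_ext_iff_of_nodup (tagWord_nodup hN')
      (List.Nodup.map_on (fun e he f hf h => shift_inj hN hPB hI e he f hf h) hnd)]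
    intro e
    rw [List.mem_map]
    constructor
    · intro he
      exact shift_surj hN hPB hI hN' e he
    · rintro ⟨f, hf, rfl⟩
      exact shift_mem hN hPB hI hN' f hf
  have hmU : ∀ e ∈ U, e ∈ tagWord R C T := fun e he => by rw [hUV]; simp [he]
  have hmV : ∀ e ∈ V, e ∈ tagWord R C T := fun e he => by rw [hUV]; simp [he]
  have hmA : (r0, st0, i + 1, A) ∈ tagWord R C T := by rw [hUV]; simp
  rw [hUV, List.pairwise_append, List.pairwise_cons] at hpw
  obtain ⟨hpU, ⟨hpAV, hpV⟩, hpUV⟩ := hpw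
  have huniq : ∀ e ∈ tagWord R C T, e.2.2.1 = i + 1 ∧ e.2.2.2 = A → e = (r0, st0, i + 1, A) := by
    rintro ⟨r, st, x, j⟩ he ⟨h1, h2⟩
    simp only at h1 h2
    subst h1 h2
    obtain ⟨rfl, rfl⟩ := tag_ext hN he hmA
    rfl
  have hU : (U.map (shiftE i A k)).map forgetC = U.map forgetC := by
    rw [List.map_map]
    refine List.map_congr_left fun e he => forget_shift fun h => ?_
    have h1 := huniq e (hmU e he) h
    have h2 := hpUV e he _ List.mem_cons_self
    rw [h1] at h2
    exact Bef.irrefl _ h2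
  have hV : (V.map (shiftE i A k)).map forgetC = V.map forgetC := by
    rw [List.map_map]
    refine List.map_congr_left fun e he => forget_shift fun h => ?_
    have h1 := huniq e (hmV e he) h
    have h2 := hpAV e he
    rw [h1] at h2
    exact Bef.irrefl _ h2
  have hsA : forgetC (shiftE i A k (r0, st0, i + 1, A)) = (r0, st0, i) := by
    simp [shiftE, forgetC]
  have hperm2 := hperm.map forgetC
  rw [hUV, List.map_append, List.map_cons, List.map_append, List.map_cons, hU, hV, hsA] at hperm2
  have hA' := (mem_tagWord hN _).1 hmA
  simp only at hA'
  have hpair : (U.map forgetC ++ (r0, st0, i) :: V.map forgetC).Pairwise ValLE := by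
    rw [List.pairwise_append, List.pairwise_cons, List.pairwise_map, List.pairwise_map]
    refine ⟨hpU.imp_of_mem fun ha hb h => bef_val hN (hmU _ ha) (hmU _ hb) h,
      ⟨?_, hpV.imp_of_mem fun ha hb h => bef_val hN (hmV _ ha) (hmV _ hb) h⟩, ?_⟩
    · intro b hb
      obtain ⟨e, he, rfl⟩ := List.mem_map.1 hb
      have h1 := hpAV e he
      have h2 := (mem_tagWord hN _).1 (hmV e he)
      obtain ⟨r, st, x, j⟩ := e
      unfold Bef at h1
      unfold ValLE forgetC
      simp only at h1 h2 ⊢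
      rcases h1 with h1 | ⟨h1, h3 | h3 | h3⟩
      · exact Or.inl h1
      · exact Or.inr ⟨h1, Or.inl h3⟩
      · exact Or.inr ⟨h1, Or.inr (Or.inl ⟨h3.1, h3.2.1, by omega⟩)⟩
      · refine Or.inr ⟨h1, Or.inr (Or.inr ⟨h3.1, h3.2.1, ?_⟩)⟩
        have := hN.mono h1.le h3.2.2.le (Or.inr h3.2.2) hA'.1.1 h2.1.1
        omega
    · intro a ha b hb
      obtain ⟨e, he, rfl⟩ := List.mem_map.1 ha
      rcases List.mem_cons.1 hb with rfl | hb
      · have h1 := hpUV e he _ List.mem_cons_self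
        have h2 := (mem_tagWord hN _).1 (hmU e he)
        obtain ⟨r, st, x, j⟩ := e
        unfold Bef at h1
        unfold ValLE forgetC
        simp only at h1 h2 ⊢
        rcases h1 with h1 | ⟨h1, h3 | h3 | h3⟩
        · exact Or.inl h1
        · exact Or.inr ⟨h1, Or.inl h3⟩
        · exact Or.inr ⟨h1, Or.inr (Or.inl ⟨h3.1, h3.2.1, by omega⟩)⟩
        · refine Or.inr ⟨h1, Or.inr (Or.inr ⟨h3.1, h3.2.1, ?_⟩)⟩
          have h4 := hN.mono h1.le h3.2.2.le (Or.inr h3.2.2) h2.1.1 hA'.1.1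
          rcases Nat.lt_or_ge i x with h5 | h5
          · exfalso
            obtain rfl : x = i + 1 := by omega
            subst h1
            exact no_left_pivot hN hA hA'.1 h3.2.2 h2.1.1 (h2.2.1 h3.1)
          · exact h5
      · obtain ⟨f, hf, rfl⟩ := List.mem_map.1 hb
        exact bef_val hN (hmU _ he) (hmV _ hf) (hpUV e he f (List.mem_cons_of_mem _ hf))
  have heq := List.Perm.eq_of_pairwise (fun a b _ _ h h' => ValLE.antisymm h h')
    (tag_val_pairwise hN') hpair hperm2
  have := congrArg (List.map (fun a : ℕ × Bool × ℕ => a.2.2)) heq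
  rw [← tagWord_map]
  simpa [List.map_map, forgetC, Function.comp_def] using this

theorem erel_key {lam mu : ℕ → ℕ}
    (hlam : IsPartitionFun lam) (hmu : IsPartitionFun mu)
    {R C : ℕ} (hR : ∀ r, R ≤ r → lam r = 0) (hC : ∀ r, lam r ≤ C)
    {i : ℕ} (hi1 : 1 ≤ i) {T : ℕ → ℕ → Finset ℕ} (hT : IsSVRPP lam mu T)
    {T' : ℕ → ℕ → Finset ℕ} (h : ERel i T T') :
    EWord i (readWord R C T) = some (readWord R C T') := by
  have hN := svrpp_nice hlam hmu hR hC hT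
  obtain ⟨A, S', hA, hs, hnd, rfl⟩ := h
  obtain ⟨k, hI, rfl⟩ := reach_Sk hN hA hs
  have hN' := svrpp_nice hlam hmu hR hC (merge_svrpp hi1 hN hT hI hnd)
  have hPB : PB i T A := by
    have := hA.1
    rwa [colPureB_iff] at this
  obtain ⟨r, hr⟩ := hPB.1
  obtain ⟨r0, st0, hm⟩ := exists_tag hN hr
  obtain ⟨U, V, hUV⟩ := List.append_of_mem hm
  rw [EWord_some hN hUV hA, read_shift hN hA hI hN' hUV]

/-- For `T ∈ SVRPP^n(lam/mu)` and `i ∈ {1,…,n−1}`,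
`E_i(read(T)) = read(e_i(T))`, with both sides `0` simultaneously; in particular
`e_i(T) = 0` iff `E_i(read(T)) = 0`. -/
theorem EWord_readWord_intertwine (lam mu : ℕ → ℕ)
    (hlam : IsPartitionFun lam) (hmu : IsPartitionFun mu) (hsub : ∀ r, mu r ≤ lam r)
    (R C : ℕ) (hR : ∀ r, R ≤ r → lam r = 0) (hC : ∀ r, lam r ≤ C)
    (n : ℕ) (hn : 1 ≤ n) (i : ℕ) (hi1 : 1 ≤ i) (hi2 : i < n)
    (T : ℕ → ℕ → Finset ℕ) (hT : IsSVRPPn lam mu n T) :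
    (eOp i T = none ↔ EWord i (readWord R C T) = none) ∧
    (∀ T', eOp i T = some T' →
      EWord i (readWord R C T) = some (readWord R C T')) := by
  have hN := svrpp_nice hlam hmu hR hC hT.1
  refine ⟨⟨fun h => ?_, fun h => ?_⟩, fun T' h => ?_⟩
  · by_contra hc
    obtain ⟨A, hA⟩ := EWord_ne_none hN hc
    have hex := erel_exists hN hA
    unfold eOp at h
    rw [dif_pos hex] at h
    exact Option.some_ne_none _ h
  · unfold eOp
    rw [dif_neg]
    rintro ⟨T', hT'⟩
    rw [erel_key hlam hmu hR hC hi1 hT.1 hT'] at h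
    exact Option.some_ne_none _ h
  · unfold eOp at h
    split_ifs at h with hex
    rw [Option.some.injEq] at h
    subst h
    exact erel_key hlam hmu hR hC hi1 hT.1 hex.choose_spec
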